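/- arXiv:1707.02501 — 3 statements merged into one kernel-verified Lean document; each statement's English description precedes it below -/
import Mathlib

section
/- There is no pair (t,x) ∈ ℚ × ℚ satisfying x² + 256t³ + 576t² + 432t + 540 = 0, and there is no pair (t,x) ∈ ℚ × ℚ satisfying x² + 16(16t² − 8t + 5)(64t³ + 144t² + 108t + 135) = 0. -/
/-!
With `u = -(4t + 3)` the two curves become `y² = u³ - 108` and `y² = (u² + 8u + 20)(u³ - 108)`.

A point `(u, y)` of the first gives `(18 + y)³ + (18 - y)³ = 4(3u)³`, and `a³ + b³ = 4c³` forces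
`c = 0` by infinite descent: for coprime `a`, `b` the factor `a² - ab + b²` of `a³ + b³` leads to an
equation `p² + 3q² = s³`, which unique factorization in the Eisenstein integers resolves into a
smaller solution.

On the second curve, write `u = p / q²` in lowest terms: both factors are then the same squarefree
`d > 0` times a square, and the resultant of the factors forces `d ∣ 85`. Reduction modulo `17²`
excludes `17 ∣ d`. For `d = 5` put `w = (p + 6q²) / 9`, an integer. Modulo `w` the quadratic factor
is `8q⁴` and the cubic one `-324q⁶`, so that `10` (if `w` is odd) or `-5` modulo `w / 2` (if `w` is
even) would be a square, against quadratic reciprocity. For `d = 1` the cubic factor gives a point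
of the first curve.
-/

namespace CurvesC4C5

/-! ### The equation `p² + 3q² = s³` -/

lemma three_not_dvd_of_sq_add_three_mul_sq_eq_cube {p q s : ℤ} (hpq : IsCoprime p q)
    (h : p ^ 2 + 3 * q ^ 2 = s ^ 3) : ¬ 3 ∣ p := by
  rintro ⟨r, rfl⟩
  obtain ⟨t, rfl⟩ : 3 ∣ s :=
    Int.prime_three.dvd_of_dvd_pow (n := 3) ⟨3 * r ^ 2 + q ^ 2, by linear_combination -h⟩
  have hq : 3 ∣ q :=
    Int.prime_three.dvd_of_dvd_pow (n := 2) ⟨3 * t ^ 3 - r ^ 2, by linarith⟩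
  exact Int.prime_three.not_isUnit (hpq.isUnit_of_dvd' (dvd_mul_right 3 r) hq)

lemma odd_add_of_sq_add_three_mul_sq_eq_cube {p q s : ℤ} (hpq : IsCoprime p q)
    (h : p ^ 2 + 3 * q ^ 2 = s ^ 3) : Odd (p + q) := by
  by_contra hne
  obtain ⟨k, hk⟩ := Int.not_odd_iff_even.1 hne
  obtain rfl : q = 2 * k - p := by omega
  obtain ⟨t, rfl⟩ : 2 ∣ s := Int.prime_two.dvd_of_dvd_pow (n := 3)
    ⟨2 * p ^ 2 + 6 * k ^ 2 - 6 * k * p, by linear_combination -h⟩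
  have heven : Even (p ^ 2 + 3 * (k * (k - p))) :=
    even_iff_two_dvd.2 ⟨t ^ 3, by linarith⟩
  have hp : 2 ∣ p := by
    rw [← even_iff_two_dvd]
    have h3 : ¬ Even (3 : ℤ) := by decide
    simp only [Int.even_add, Int.even_pow, Int.even_mul, Int.even_sub, h3] at heven
    tauto
  exact Int.prime_two.not_isUnit (hpq.isUnit_of_dvd' hp (dvd_sub (dvd_mul_right 2 k) hp))

lemma isCoprime_two_mul_sq_add_three_mul_sq {p q s : ℤ} (hpq : IsCoprime p q)
    (h : p ^ 2 + 3 * q ^ 2 = s ^ 3) : IsCoprime (2 * p) (p ^ 2 + 3 * q ^ 2) := by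
  have h2 : IsCoprime 2 (p ^ 2 + 3 * q ^ 2) := by
    obtain ⟨k, hk⟩ := odd_add_of_sq_add_three_mul_sq_eq_cube hpq h
    exact Int.isCoprime_two_left.2 ⟨k * (p + q + 1) + q ^ 2 - p * q, by
      linear_combination (p + q + 1) * hk⟩
  have h3 := (Prime.coprime_iff_not_dvd Int.prime_three).2
    (three_not_dvd_of_sq_add_three_mul_sq_eq_cube hpq h)
  have hp := (h3.symm.mul_right hpq.pow_right).add_mul_left_right (y := 3 * q ^ 2) p
  rw [← sq, add_comm] at hp
  exact h2.mul_left hp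

section Eisenstein

open NumberField

variable {K : Type*} [Field K] {ζ : K} (hζ : IsPrimitiveRoot ζ 3)

/-- The square root `2ζ + 1` of `-3` in the ring of integers of `ℚ(ζ)`, `ζ` a primitive cube root of
unity. It spans, together with `1`, the index-two subring `ℤ[√-3]` of the Eisenstein integers. -/
noncomputable def sqrtNegThree : 𝓞 K := 2 * hζ.toInteger + 1

lemma toInteger_sq : hζ.toInteger ^ 2 = -hζ.toInteger - 1 :=
  IsCyclotomicExtension.Rat.Three.eta_sq hζ

lemma sqrtNegThree_sq : sqrtNegThree hζ ^ 2 = -3 := by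
  unfold sqrtNegThree
  linear_combination 4 * toInteger_sq hζ

lemma add_mul_sub_sqrtNegThree (x y : 𝓞 K) :
    (x + y * sqrtNegThree hζ) * (x - y * sqrtNegThree hζ) = x ^ 2 + 3 * y ^ 2 := by
  linear_combination -y ^ 2 * sqrtNegThree_sq hζ

lemma two_mul_toInteger_mul (r s : ℤ) :
    (2 * hζ.toInteger * (r + s * sqrtNegThree hζ) : 𝓞 K) =
      (-r - 3 * s : ℤ) + (r - s : ℤ) * sqrtNegThree hζ := by
  push_cast [sqrtNegThree]
  linear_combination 4 * s * toInteger_sq hζ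

lemma two_mul_toInteger_sq_mul (r s : ℤ) :
    (2 * hζ.toInteger ^ 2 * (r + s * sqrtNegThree hζ) : 𝓞 K) =
      (3 * s - r : ℤ) + (-r - s : ℤ) * sqrtNegThree hζ := by
  push_cast [sqrtNegThree]
  linear_combination (2 * (r + s + 2 * s * hζ.toInteger) - 4 * s) * toInteger_sq hζ

lemma isCoprime_intCast_add_sub_mul_sqrtNegThree {p q : ℤ}
    (h : IsCoprime (2 * p) (p ^ 2 + 3 * q ^ 2)) :
    IsCoprime (p + q * sqrtNegThree hζ : 𝓞 K) (p - q * sqrtNegThree hζ) := by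
  have hsum : IsCoprime ((p - q * sqrtNegThree hζ) + (p + q * sqrtNegThree hζ) * 1 : 𝓞 K)
      ((p + q * sqrtNegThree hζ) * (p - q * sqrtNegThree hζ)) := by
    convert h.intCast (R := 𝓞 K) using 1
    · push_cast
      ring
    · push_cast
      exact add_mul_sub_sqrtNegThree hζ _ _
  exact hsum.of_mul_right_left.symm.of_add_mul_left_right

lemma intCast_add_mul_sqrtNegThree_inj [CharZero K] {a b c d : ℤ} :
    (a + b * sqrtNegThree hζ : 𝓞 K) = c + d * sqrtNegThree hζ ↔ a = c ∧ b = d := by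
  refine ⟨fun h ↦ ?_, fun ⟨hac, hbd⟩ ↦ by rw [hac, hbd]⟩
  have hsq : (a - c) ^ 2 + 3 * (b - d) ^ 2 = 0 := by
    have : (((a - c) ^ 2 + 3 * (b - d) ^ 2 : ℤ) : 𝓞 K) = 0 := by
      push_cast
      linear_combination (a - c - (b - d) * sqrtNegThree hζ) * h
        + (b - d : 𝓞 K) ^ 2 * sqrtNegThree_sq hζ
    exact_mod_cast this
  have hbd : b - d = 0 := by
    apply pow_eq_zero_iff two_ne_zero |>.1
    nlinarith [sq_nonneg (a - c), sq_nonneg (b - d)]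
  have hac : a - c = 0 := by
    apply pow_eq_zero_iff two_ne_zero |>.1
    nlinarith [sq_nonneg (a - c), sq_nonneg (b - d)]
  omega

variable [NumberField K] [IsCyclotomicExtension {3} ℚ K]

lemma exists_eq_intCast_add_mul_toInteger (z : 𝓞 K) : ∃ x y : ℤ, z = x + y * hζ.toInteger := by
  obtain ⟨f, hdeg, rfl⟩ := hζ.integralPowerBasis.exists_eq_aeval z
  rw [hζ.integralPowerBasis_dim, Nat.totient_prime Nat.prime_three] at hdeg
  obtain ⟨y, x, rfl⟩ := Polynomial.exists_eq_X_add_C_of_natDegree_le_one (Nat.le_of_lt_succ hdeg)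
  exact ⟨x, y, by simp [add_comm]⟩

lemma exists_unit_mul_intCast_add_mul_sqrtNegThree (z : 𝓞 K) :
    ∃ (u : (𝓞 K)ˣ) (m n : ℤ), z = u * (m + n * sqrtNegThree hζ) := by
  obtain ⟨x, y, rfl⟩ := exists_eq_intCast_add_mul_toInteger hζ z
  have hη := toInteger_sq hζ
  let η : (𝓞 K)ˣ := (hζ.toInteger_isPrimitiveRoot.isUnit three_ne_zero).unit
  have hηval : (η : 𝓞 K) = hζ.toInteger := rfl
  unfold sqrtNegThree
  obtain ⟨k, rfl | rfl⟩ := Int.even_or_odd' y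
  · refine ⟨1, x - k, k, ?_⟩
    push_cast
    ring
  obtain ⟨j, rfl | rfl⟩ := Int.even_or_odd' x
  · refine ⟨η, 2 * k + 1 - j, -j, ?_⟩
    push_cast [hηval]
    linear_combination 2 * j * hη
  · refine ⟨η ^ 2, -j - k - 1, j - k, ?_⟩
    push_cast [hηval]
    linear_combination (2 * j + 1 - (2 * j - 2 * k) * hζ.toInteger) * hη

lemma eq_or_eq_neg_of_eq_unit_mul {p q r s : ℤ} (hpq : Odd (p + q)) {u : (𝓞 K)ˣ}
    (h : (p + q * sqrtNegThree hζ : 𝓞 K) = u * (r + s * sqrtNegThree hζ)) :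
    (p = r ∧ q = s) ∨ (p = -r ∧ q = -s) := by
  obtain ⟨t, ht⟩ := hpq
  have compare {a b : ℤ}
      (hab : (2 * u * (r + s * sqrtNegThree hζ) : 𝓞 K) = a + b * sqrtNegThree hζ) :
      2 * p = a ∧ 2 * q = b := by
    refine (intCast_add_mul_sqrtNegThree_inj hζ).1 ?_
    push_cast
    linear_combination 2 * h + hab
  have hη := two_mul_toInteger_mul hζ r s
  have hη' := two_mul_toInteger_sq_mul hζ r s
  have hu := IsCyclotomicExtension.Rat.Three.Units.mem hζ u
  simp only [List.mem_cons, List.not_mem_nil, or_false] at hu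
  rcases hu with rfl | rfl | rfl | rfl | rfl | rfl
  · have := compare (a := 2 * r) (b := 2 * s) (by push_cast; ring)
    omega
  · have := compare (a := -(2 * r)) (b := -(2 * s)) (by push_cast; ring)
    omega
  -- The other four units would make `p + q` even.
  · have := compare hη
    omega
  · have := compare (a := -(-r - 3 * s)) (b := -(r - s)) (by
      push_cast [IsUnit.unit_spec] at hη ⊢
      linear_combination -hη)
    omega
  · have := compare hη'
    omega
  · have := compare (a := -(3 * s - r)) (b := -(-r - s)) (by
      push_cast [IsUnit.unit_spec] at hη' ⊢
      linear_combination -hη')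
    omega

lemma exists_intCast_add_mul_sqrtNegThree_eq_unit_mul {p q s : ℤ} (hpq : IsCoprime p q)
    (h : p ^ 2 + 3 * q ^ 2 = s ^ 3) :
    ∃ (u : (𝓞 K)ˣ) (m n : ℤ), (p + q * sqrtNegThree hζ : 𝓞 K) =
      u * ((m * (m ^ 2 - 9 * n ^ 2) : ℤ) + (3 * n * (m ^ 2 - n ^ 2) : ℤ) * sqrtNegThree hζ) := by
  have : IsPrincipalIdealRing (𝓞 K) := IsCyclotomicExtension.Rat.three_pid K
  have hmul : (p + q * sqrtNegThree hζ : 𝓞 K) * (p - q * sqrtNegThree hζ) = (s : 𝓞 K) ^ 3 := by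
    rw [add_mul_sub_sqrtNegThree]
    exact_mod_cast congrArg (Int.cast : ℤ → 𝓞 K) h
  obtain ⟨d, u, hu⟩ := exists_associated_pow_of_mul_eq_pow'
    (isCoprime_intCast_add_sub_mul_sqrtNegThree hζ
      (isCoprime_two_mul_sq_add_three_mul_sq hpq h)) hmul
  obtain ⟨v, m, n, rfl⟩ := exists_unit_mul_intCast_add_mul_sqrtNegThree hζ d
  refine ⟨v ^ 3 * u, m, n, ?_⟩
  rw [← hu]
  push_cast
  linear_combination
    (v ^ 3 * u * (3 * m * n ^ 2 + n ^ 3 * sqrtNegThree hζ) : 𝓞 K) * sqrtNegThree_sq hζ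

end Eisenstein

theorem exists_of_sq_add_three_mul_sq_eq_cube {p q s : ℤ} (hpq : IsCoprime p q)
    (h : p ^ 2 + 3 * q ^ 2 = s ^ 3) :
    ∃ m n : ℤ, p = m * (m ^ 2 - 9 * n ^ 2) ∧ q = 3 * n * (m ^ 2 - n ^ 2) := by
  have : IsCyclotomicExtension {3} ℚ (CyclotomicField 3 ℚ) :=
    CyclotomicField.isCyclotomicExtension 3 ℚ
  have : NumberField (CyclotomicField 3 ℚ) := IsCyclotomicExtension.numberField {3} ℚ _
  have hζ := IsCyclotomicExtension.zeta_spec 3 ℚ (CyclotomicField 3 ℚ)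
  obtain ⟨u, m, n, hu⟩ := exists_intCast_add_mul_sqrtNegThree_eq_unit_mul hζ hpq h
  rcases eq_or_eq_neg_of_eq_unit_mul hζ (odd_add_of_sq_add_three_mul_sq_eq_cube hpq h) hu with
    ⟨hp, hq⟩ | ⟨hp, hq⟩
  · exact ⟨m, n, hp, hq⟩
  · exact ⟨-m, -n, by rw [hp]; ring, by rw [hq]; ring⟩

/-! ### Descent for `a³ + b³ = 4c³` -/

lemma exists_pow_of_mul_mul_eq_pow {x y z r : ℤ} {n : ℕ} (hn : Odd n) (hxy : IsCoprime x y)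
    (hxz : IsCoprime x z) (hyz : IsCoprime y z) (h : x * y * z = r ^ n) :
    ∃ α β γ : ℤ, x = α ^ n ∧ y = β ^ n ∧ z = γ ^ n ∧ r = α * β * γ := by
  obtain ⟨⟨δ, hδ⟩, γ, hγ⟩ := Int.eq_pow_of_mul_eq_pow_odd (hxz.mul_left hyz) hn h
  obtain ⟨⟨α, hα⟩, β, hβ⟩ := Int.eq_pow_of_mul_eq_pow_odd hxy hn hδ
  refine ⟨α, β, γ, hα, hβ, hγ, (Odd.pow_inj hn).1 ?_⟩
  rw [← h, hα, hβ, hγ, mul_pow, mul_pow]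

lemma three_dvd_add_of_cube_add_cube_eq {a b c : ℤ} (h : a ^ 3 + b ^ 3 = 4 * c ^ 3) :
    3 ∣ a + b := by
  have hmod : ∀ x y z : ZMod 9, x ^ 3 + y ^ 3 = 4 * z ^ 3 → 3 * (x + y) = 0 := by decide
  have h9 : (9 : ℤ) ∣ 3 * (a + b) := (ZMod.intCast_zmod_eq_zero_iff_dvd _ 9).1 <| by
    exact_mod_cast hmod a b c (by exact_mod_cast congrArg (Int.cast : ℤ → ZMod 9) h)
  omega

lemma odd_of_cube_add_cube_eq {a b c : ℤ} (hab : IsCoprime a b) (h : a ^ 3 + b ^ 3 = 4 * c ^ 3) :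
    Odd a ∧ Odd b := by
  have heven : Even (a ^ 3 + b ^ 3) := h ▸ ⟨2 * c ^ 3, by ring⟩
  have hiff : Odd a ↔ Odd b := by simpa [Int.even_add', Int.odd_pow] using heven
  suffices Odd a from ⟨this, hiff.1 this⟩
  by_contra ha
  have hb := mt hiff.2 ha
  rw [Int.not_odd_iff_even, even_iff_two_dvd] at ha hb
  exact Int.prime_two.not_isUnit (hab.isUnit_of_dvd' ha hb)

lemma four_dvd_add_of_cube_add_cube_eq {a b c : ℤ} (hab : IsCoprime a b)
    (h : a ^ 3 + b ^ 3 = 4 * c ^ 3) : 4 ∣ a + b := by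
  obtain ⟨⟨i, rfl⟩, j, rfl⟩ := odd_of_cube_add_cube_eq hab h
  have hmod : ∀ x y z : ZMod 4,
      (2 * x + 1) ^ 3 + (2 * y + 1) ^ 3 = 4 * z ^ 3 → 2 * x + 1 + (2 * y + 1) = 0 := by decide
  refine (ZMod.intCast_zmod_eq_zero_iff_dvd _ 4).1 ?_
  exact_mod_cast hmod i j c (by exact_mod_cast congrArg (Int.cast : ℤ → ZMod 4) h)

lemma exists_six_mul_add_of_cube_add_cube_eq {a b c : ℤ} (hab : IsCoprime a b)
    (h : a ^ 3 + b ^ 3 = 4 * c ^ 3) : ∃ k q : ℤ, a = 6 * k + q ∧ IsCoprime (6 * k) q ∧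
      c ^ 3 = 9 * k * (12 * k ^ 2 + q ^ 2) := by
  have h3 := three_dvd_add_of_cube_add_cube_eq h
  have h4 := four_dvd_add_of_cube_add_cube_eq hab h
  obtain ⟨k, hk⟩ : 12 ∣ a + b := by omega
  obtain rfl : b = 12 * k - a := by omega
  obtain ⟨x, y, hxy⟩ := hab
  exact ⟨k, a - 6 * k, by ring, ⟨x + y, x - y, by linear_combination hxy⟩,
    by linarith⟩

lemma exists_three_mul_cube_of_cube_eq {k q c : ℤ} (hkq : IsCoprime (6 * k) q)
    (h : c ^ 3 = 9 * k * (12 * k ^ 2 + q ^ 2)) :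
    ∃ t s : ℤ, k = 3 * t ^ 3 ∧ q ^ 2 + 3 * (2 * k) ^ 2 = s ^ 3 ∧ c = 3 * t * s := by
  have hcop : IsCoprime (9 * k) (q ^ 2 + 6 * k * (2 * k)) :=
    (hkq.pow_right.add_mul_left_right (2 * k)).pow_left.of_isCoprime_of_dvd_left
      (y := (6 * k) ^ 2) ⟨4 * k, by ring⟩
  obtain ⟨⟨r, hr⟩, s, hs⟩ :=
    Int.eq_pow_of_mul_eq_pow_odd (k := 3) (c := c) hcop (by decide) (by rw [h]; ring)
  obtain ⟨t, rfl⟩ : 3 ∣ r := Int.prime_three.dvd_of_dvd_pow (n := 3) ⟨3 * k, by linarith⟩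
  refine ⟨t, s, by linarith, by rw [← hs]; ring, (Odd.pow_inj (n := 3) (by decide)).1 ?_⟩
  rw [mul_pow, ← hs, ← hr, h]
  ring

lemma exists_cube_add_cube_eq_of_two_mul_cube_eq {m n t : ℤ} (hmn : IsCoprime n m)
    (hn : Even n) (h : 2 * t ^ 3 = n * (m - n) * (m + n)) :
    ∃ α β γ : ℤ, α ^ 3 + β ^ 3 = 4 * γ ^ 3 ∧ γ ∣ t := by
  obtain ⟨j, rfl⟩ := even_iff_two_dvd.1 hn
  have hsub : IsCoprime (2 * j) (m - 2 * j) := by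
    simpa [sub_eq_add_neg] using hmn.add_mul_left_right (-1)
  have hadd : IsCoprime (2 * j) (m + 2 * j) := by simpa using hmn.add_mul_left_right 1
  have hsub_add : IsCoprime (m - 2 * j) (m + 2 * j) := by
    have h4 : IsCoprime (m - 2 * j) (4 * j) :=
      (hsub.pow_left (m := 2)).symm.of_isCoprime_of_dvd_right ⟨j, by ring⟩
    rw [show m + 2 * j = 4 * j + (m - 2 * j) * 1 by ring]
    exact h4.add_mul_left_right 1
  obtain ⟨γ, β, α, hγ, hβ, hα, rfl⟩ := exists_pow_of_mul_mul_eq_pow (n := 3) (by decide)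
    hsub.of_mul_left_right hadd.of_mul_left_right hsub_add (r := t) (by linarith)
  exact ⟨α, -β, γ, by rw [← hγ, ← hα, Odd.neg_pow (by decide), ← hβ]; ring, β * α, by ring⟩

theorem exists_cube_add_cube_eq_natAbs_lt {a b c : ℤ} (hab : IsCoprime a b)
    (h : a ^ 3 + b ^ 3 = 4 * c ^ 3) (hc : c ≠ 0) :
    ∃ a' b' c' : ℤ, a' ^ 3 + b' ^ 3 = 4 * c' ^ 3 ∧ c' ≠ 0 ∧ c'.natAbs < c.natAbs := by
  obtain ⟨k, q, rfl, hkq, hck⟩ := exists_six_mul_add_of_cube_add_cube_eq hab h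
  obtain ⟨t, s, rfl, hs, rfl⟩ := exists_three_mul_cube_of_cube_eq hkq hck
  have hq : Odd q := Int.isCoprime_two_left.1 (hkq.of_isCoprime_of_dvd_left ⟨9 * t ^ 3, by ring⟩)
  obtain ⟨m, n, rfl, hn⟩ := exists_of_sq_add_three_mul_sq_eq_cube
    (hkq.of_isCoprime_of_dvd_left ⟨3, by ring⟩).symm hs
  have hmn : IsCoprime n m := by
    refine (hkq.of_isCoprime_of_dvd_left ⟨9 * (m ^ 2 - n ^ 2), ?_⟩).of_isCoprime_of_dvd_right
      (dvd_mul_right m _)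
    linarith
  have hn_even : Even n := by
    obtain ⟨hm, hdiff⟩ := Int.odd_mul.1 hq
    have h9 : Even (9 * n ^ 2) := (Int.odd_sub.1 hdiff).1 hm.pow
    simpa [Int.even_mul, Int.even_pow, show ¬ Even (9 : ℤ) by decide] using h9
  obtain ⟨a', b', c', h', d, rfl⟩ :=
    exists_cube_add_cube_eq_of_two_mul_cube_eq hmn hn_even (t := t) (by linarith)
  have hc' : c' ≠ 0 := by
    rintro rfl
    simp at hc
  refine ⟨a', b', c', h', hc', ?_⟩
  have hds : d * s ≠ 0 := by
    rintro h0
    exact hc (by linear_combination 3 * c' * h0)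
  calc c'.natAbs < 3 * c'.natAbs := by have := Int.natAbs_pos.2 hc'; omega
    _ ≤ 3 * c'.natAbs * (d * s).natAbs := Nat.le_mul_of_pos_right _ (Int.natAbs_pos.2 hds)
    _ = (3 * (c' * d) * s).natAbs := by simp [Int.natAbs_mul, mul_assoc]

lemma exists_isCoprime_of_cube_add_cube_eq {a b c : ℤ} (h : a ^ 3 + b ^ 3 = 4 * c ^ 3)
    (hc : c ≠ 0) :
    ∃ a' b' c' : ℤ, IsCoprime a' b' ∧ a' ^ 3 + b' ^ 3 = 4 * c' ^ 3 ∧ c' ≠ 0 ∧ c' ∣ c := by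
  have hab : 0 < Int.gcd a b := by
    refine Nat.pos_of_ne_zero fun h0 ↦ hc ?_
    obtain ⟨rfl, rfl⟩ := Int.gcd_eq_zero_iff.1 h0
    simpa using h.symm
  obtain ⟨g, a, b, hg, hcop, rfl, rfl⟩ := Int.exists_gcd_one' hab
  obtain ⟨k, hk⟩ : (g : ℤ) ∣ 2 * c :=
    (Int.pow_dvd_pow_iff three_ne_zero).1 ⟨2 * (a ^ 3 + b ^ 3), by linear_combination -2 * h⟩
  have hg0 : (g : ℤ) ≠ 0 := by exact_mod_cast hg.ne'
  have hk3 : k ^ 3 = 2 * (a ^ 3 + b ^ 3) :=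
    mul_left_cancel₀ (pow_ne_zero 3 hg0) <| by
      linear_combination -2 * h - (4 * c ^ 2 + 2 * c * g * k + g ^ 2 * k ^ 2) * hk
  obtain ⟨d, rfl⟩ : 2 ∣ k := Int.prime_two.dvd_of_dvd_pow ⟨_, hk3⟩
  obtain rfl : c = g * d := by linarith
  exact ⟨a, b, d, Int.isCoprime_iff_gcd_eq_one.2 hcop, by linarith, right_ne_zero_of_mul hc,
    dvd_mul_left d g⟩

theorem eq_zero_of_cube_add_cube_eq_four_mul_cube {a b c : ℤ} (h : a ^ 3 + b ^ 3 = 4 * c ^ 3) :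
    c = 0 := by
  induction hN : c.natAbs using Nat.strong_induction_on generalizing a b c with
  | _ N ih =>
    by_contra hc
    obtain ⟨a₁, b₁, c₁, hcop, h₁, hc₁, hdvd⟩ := exists_isCoprime_of_cube_add_cube_eq h hc
    obtain ⟨a₂, b₂, c₂, h₂, hc₂, hlt⟩ := exists_cube_add_cube_eq_natAbs_lt hcop h₁ hc₁
    have hle : c₁.natAbs ≤ c.natAbs :=
      Nat.le_of_dvd (Int.natAbs_pos.2 hc) (Int.natAbs_dvd_natAbs.2 hdvd)
    exact hc₂ (ih _ (hN ▸ hlt.trans_le hle) h₂ rfl)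

theorem rat_eq_zero_of_cube_add_cube_eq_four_mul_cube {x y z : ℚ}
    (h : x ^ 3 + y ^ 3 = 4 * z ^ 3) : z = 0 := by
  have hint : (x.num * y.den * z.den) ^ 3 + (y.num * x.den * z.den) ^ 3 =
      4 * (z.num * x.den * y.den) ^ 3 := by
    qify
    rw [← x.den_mul_eq_num, ← y.den_mul_eq_num, ← z.den_mul_eq_num]
    linear_combination (x.den * y.den * z.den : ℚ) ^ 3 * h
  simpa using eq_zero_of_cube_add_cube_eq_four_mul_cube hint

theorem sq_ne_cube_sub_108 (u y : ℚ) : y ^ 2 ≠ u ^ 3 - 108 := by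
  intro h
  have hu := rat_eq_zero_of_cube_add_cube_eq_four_mul_cube (x := 18 + y) (y := 18 - y)
    (z := 3 * u) (by linear_combination 108 * h)
  obtain rfl : u = 0 := by linarith
  nlinarith [sq_nonneg y]

/-! ### Two-descent on `y² = (u² + 8u + 20)(u³ - 108)` -/

lemma exists_squarefree_of_mul_eq_sq {g f e : ℤ} (hg : 0 < g) (h : g * f = e ^ 2) :
    ∃ d a b : ℤ, 0 < d ∧ Squarefree d ∧ g = d * a ^ 2 ∧ f = d * b ^ 2 := by
  lift g to ℕ using hg.le
  obtain ⟨d, a, rfl, hd⟩ := Nat.sq_mul_squarefree g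
  push_cast at hg h
  have ha : (a : ℤ) ≠ 0 := by
    rintro h0
    simp [h0] at hg
  have hd' : Squarefree (d : ℤ) := Int.squarefree_natCast.2 hd
  obtain ⟨k, rfl⟩ : (a : ℤ) ∣ e :=
    (Int.pow_dvd_pow_iff two_ne_zero).1 ⟨d * f, by rw [← h]; ring⟩
  have hk : d * f = k ^ 2 := mul_left_cancel₀ (pow_ne_zero 2 ha) (by linear_combination h)
  obtain ⟨b, rfl⟩ := (hd'.dvd_pow_iff_dvd two_ne_zero).1 (Dvd.intro f hk)
  have hd0 : (d : ℤ) ≠ 0 := hd'.ne_zero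
  refine ⟨d, a, b, by positivity, hd', by push_cast; ring, mul_left_cancel₀ hd0 ?_⟩
  rw [hk]
  ring

lemma seventeen_dvd_of_dvd_sq_sub_sq {x y : ℤ} (h : 17 ∣ 9 * x ^ 2 - 11 * y ^ 2) :
    17 ∣ x ∧ 17 ∣ y := by
  have hmod : ∀ x y : ZMod 17, 9 * x ^ 2 - 11 * y ^ 2 = 0 → x = 0 ∧ y = 0 := by decide
  have h0 := (ZMod.intCast_zmod_eq_zero_iff_dvd _ 17).2 h
  push_cast at h0
  obtain ⟨hx, hy⟩ := hmod x y h0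
  exact ⟨(ZMod.intCast_zmod_eq_zero_iff_dvd x 17).1 hx,
    (ZMod.intCast_zmod_eq_zero_iff_dvd y 17).1 hy⟩

/-- An integral point of the covering, indexed by `d`, of the curve `y² = (u² + 8u + 20)(u³ - 108)`:
with `u = p / q²` in lowest terms, both factors are `d` times a square. -/
structure IsCoverPoint (d p q a b : ℤ) : Prop where
  isCoprime : IsCoprime p q
  ne_zero : q ≠ 0
  quadratic : p ^ 2 + 8 * p * q ^ 2 + 20 * q ^ 4 = d * a ^ 2
  cubic : p ^ 3 - 108 * q ^ 6 = d * b ^ 2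

lemma exists_sq_and_sq_of_isCoprime_mul {m x e : ℤ} (hm : 0 < m) (hmx : IsCoprime m x)
    (h : m * x = e ^ 2) : ∃ q f : ℤ, m = q ^ 2 ∧ x = f ^ 2 := by
  obtain ⟨q, rfl | hq⟩ := Int.sq_of_isCoprime hmx h
  · obtain ⟨f, rfl⟩ : q ∣ e := (Int.pow_dvd_pow_iff two_ne_zero).1 (Dvd.intro x h)
    exact ⟨q, f, rfl, mul_left_cancel₀ hm.ne' (by linear_combination h)⟩
  · linarith [sq_nonneg q]

lemma exists_isCoverPoint {u y : ℚ} (h : y ^ 2 = (u ^ 2 + 8 * u + 20) * (u ^ 3 - 108)) :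
    ∃ d p q a b : ℤ, 0 < d ∧ Squarefree d ∧ IsCoverPoint d p q a b := by
  obtain ⟨m, p, hm, hpm, hu⟩ : ∃ m p : ℤ, 0 < m ∧ IsCoprime p m ∧ (m * u : ℚ) = p :=
    ⟨u.den, u.num, by exact_mod_cast u.den_pos, u.isCoprime_num_den,
      by exact_mod_cast u.den_mul_eq_num⟩
  have hsq : IsSquare (m * ((p ^ 2 + 8 * p * m + 20 * m ^ 2) * (p ^ 3 - 108 * m ^ 3))) := by
    refine Rat.isSquare_intCast_iff.1 ⟨m ^ 3 * y, ?_⟩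
    push_cast [← hu]
    linear_combination -m ^ 6 * h
  have hcop : IsCoprime m ((p ^ 2 + 8 * p * m + 20 * m ^ 2) * (p ^ 3 - 108 * m ^ 3)) := by
    rw [show (p ^ 2 + 8 * p * m + 20 * m ^ 2) * (p ^ 3 - 108 * m ^ 3) =
      p ^ 5 + m * (8 * p ^ 4 + 20 * p ^ 3 * m - 108 * p ^ 2 * m ^ 2 - 864 * p * m ^ 3 -
        2160 * m ^ 4) by ring]
    exact hpm.symm.pow_right.add_mul_left_right _
  obtain ⟨e, he⟩ := isSquare_iff_exists_sq _ |>.1 hsq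
  obtain ⟨q, f, rfl, hf⟩ := exists_sq_and_sq_of_isCoprime_mul hm hcop he
  have hpos : 0 < p ^ 2 + 8 * p * q ^ 2 + 20 * (q ^ 2) ^ 2 := by
    nlinarith [sq_nonneg (p + 4 * q ^ 2)]
  obtain ⟨d, a, b, hd, hsf, ha, hb⟩ := exists_squarefree_of_mul_eq_sq hpos hf
  exact ⟨d, p, q, a, b, hd, hsf, hpm.of_isCoprime_of_dvd_right (dvd_pow_self q two_ne_zero),
    by rintro rfl; simp at hm, by rw [← ha]; ring, by rw [← hb]; ring⟩

namespace IsCoverPoint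

variable {d p q a b : ℤ}

lemma isCoprime_left (h : IsCoverPoint d p q a b) : IsCoprime d q := by
  refine ((h.isCoprime.pow_left (m := 3)).add_mul_left_left
    (-108 * q ^ 5)).of_isCoprime_of_dvd_left ⟨b ^ 2, ?_⟩
  linear_combination h.cubic

lemma odd_left (h : IsCoverPoint d p q a b) (hd : Squarefree d) : Odd d := by
  by_contra hodd
  obtain ⟨e, rfl⟩ := even_iff_two_dvd.1 (Int.not_odd_iff_even.1 hodd)
  have he : ¬ 2 ∣ e := fun he ↦ Int.prime_two.not_isUnit (hd 2 (mul_dvd_mul_left 2 he))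
  have hcubic := h.cubic
  obtain ⟨k, rfl⟩ : 2 ∣ p :=
    Int.prime_two.dvd_of_dvd_pow (n := 3) ⟨e * b ^ 2 + 54 * q ^ 6, by linarith⟩
  obtain ⟨c, rfl⟩ : 2 ∣ b := Int.prime_two.dvd_of_dvd_pow <|
    (Int.prime_two.dvd_or_dvd (a := e) (b := b ^ 2)
      ⟨2 * k ^ 3 - 27 * q ^ 6, by linarith⟩).resolve_left he
  have hq : 2 ∣ q := Int.prime_two.dvd_of_dvd_pow (n := 6)
    ⟨k ^ 3 - 13 * q ^ 6 - e * c ^ 2, by linarith⟩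
  exact Int.prime_two.not_isUnit (h.isCoprime.isUnit_of_dvd' (dvd_mul_right 2 k) hq)

lemma dvd_eleven_mul_add (h : IsCoverPoint d p q a b) (hd : Squarefree d) :
    d ∣ 11 * p + 13 * q ^ 2 := by
  have hcop : IsCoprime d (2 ^ 2 * q ^ 4) :=
    (Int.isCoprime_two_right.2 (h.odd_left hd)).pow_right.mul_right h.isCoprime_left.pow_right
  refine hcop.dvd_of_dvd_mul_left ⟨b ^ 2 - (p - 8 * q ^ 2) * a ^ 2, ?_⟩
  linear_combination h.cubic - (p - 8 * q ^ 2) * h.quadratic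

lemma dvd_eightyfive (h : IsCoverPoint d p q a b) (hd : Squarefree d) : d ∣ 85 := by
  obtain ⟨r, hr⟩ := h.dvd_eleven_mul_add hd
  have h1445 : d ∣ 1445 := by
    refine (h.isCoprime_left.pow_right (n := 4)).dvd_of_dvd_mul_left
      ⟨121 * a ^ 2 - (11 * p + 75 * q ^ 2) * r, ?_⟩
    linear_combination 121 * h.quadratic - (11 * p + 75 * q ^ 2) * hr
  exact (hd.dvd_pow_iff_dvd two_ne_zero).1 (h1445.trans ⟨5, by norm_num⟩)

lemma not_seventeen_dvd_left (h : IsCoverPoint d p q a b) (hd : Squarefree d) : ¬ 17 ∣ d := by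
  have h17 : Prime (17 : ℤ) := by norm_num
  intro hdvd
  have hq : ¬ 17 ∣ q := fun hq ↦ h17.not_isUnit (h.isCoprime_left.isUnit_of_dvd' hdvd hq)
  obtain ⟨r, hr⟩ := hdvd.trans (h.dvd_eleven_mul_add hd)
  obtain ⟨t, rfl⟩ : ∃ t, p = 5 * q ^ 2 + 17 * t :=
    ⟨14 * r - 9 * p - 11 * q ^ 2, by linear_combination 14 * hr⟩
  obtain ⟨e, rfl⟩ := hdvd
  have he : ¬ 17 ∣ e := fun he ↦ h17.not_isUnit (hd 17 (mul_dvd_mul_left 17 he))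
  let A := 94 * q ^ 4 + 1649 * q ^ 2 * t + 3179 * t ^ 2
  let B := 130 * q ^ 2 + 187 * t
  -- `A` and `B` are the Bézout cofactors of the two factors, whose resultant is `5780 = 17 * 340`.
  have hbezout : e * (A * a ^ 2 - B * b ^ 2) = 340 * q ^ 8 :=
    mul_left_cancel₀ h17.ne_zero (by linear_combination B * h.cubic - A * h.quadratic)
  obtain ⟨w, hw⟩ : 17 ∣ A * a ^ 2 - B * b ^ 2 :=
    (h17.dvd_or_dvd ⟨20 * q ^ 8, by rw [hbezout]; ring⟩).resolve_left he
  have hresidue : 17 ∣ 9 * (q * a) ^ 2 - 11 * b ^ 2 := by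
    refine (h17.dvd_or_dvd (a := q ^ 2) ⟨w - (5 * q ^ 4 + 97 * q ^ 2 * t + 187 * t ^ 2) * a ^ 2
      + (7 * q ^ 2 + 11 * t) * b ^ 2, ?_⟩).resolve_left fun hq2 ↦ hq (h17.dvd_of_dvd_pow hq2)
    linear_combination hw
  obtain ⟨ha, hb⟩ := seventeen_dvd_of_dvd_sq_sub_sq hresidue
  obtain ⟨a, rfl⟩ := (h17.dvd_or_dvd ha).resolve_left hq
  obtain ⟨b, rfl⟩ := hb
  have hq8 : 17 ∣ 20 * q ^ 8 := ⟨e * (A * a ^ 2 - B * b ^ 2), by linarith⟩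
  exact hq (h17.dvd_of_dvd_pow ((h17.dvd_or_dvd hq8).resolve_left (by norm_num)))

end IsCoverPoint

/-! ### The covering with `d = 5` -/

section QuadraticReciprocity

open NumberTheorySymbols

lemma jacobiSym_ne_neg_one_of_dvd {n : ℕ} {D x y : ℤ} (hy : IsCoprime y n)
    (h : (n : ℤ) ∣ x ^ 2 - D * y ^ 2) : J(D | n) ≠ -1 := by
  have hsq : J(x | n) ^ 2 = J(D | n) := by
    rw [← jacobiSym.pow_left, jacobiSym.mod_left' (Int.modEq_iff_dvd.2 h).symm,
      jacobiSym.mul_left, jacobiSym.sq_one' (Int.isCoprime_iff_gcd_eq_one.1 hy), mul_one]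
  linarith [sq_nonneg J(x | n)]

lemma jacobiSym_ten_eq_neg_one {n : ℕ} (h8 : n % 8 = 7) (h5 : n % 5 = 2 ∨ n % 5 = 3) :
    J(10 | n) = -1 := by
  have h40 : n % 40 = 7 ∨ n % 40 = 23 := by omega
  rw [jacobiSym.mod_right 10 (Nat.odd_iff.2 (by omega))]
  rcases h40 with h | h <;> norm_num [h]

lemma jacobiSym_neg_five_eq_neg_one {n : ℕ} (h4 : n % 4 = 3) (h5 : n % 5 = 1 ∨ n % 5 = 4) :
    J(-5 | n) = -1 := by
  have h20 : n % 20 = 11 ∨ n % 20 = 19 := by omega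
  rw [jacobiSym.mod_right (-5) (Nat.odd_iff.2 (by omega))]
  rcases h20 with h | h <;> norm_num [h]

lemma not_odd_of_quadratic_of_cubic {w : ℕ} {q a c : ℤ} (hq : Odd q) (hwq : IsCoprime (w : ℤ) q)
    (h5 : w % 5 = 2 ∨ w % 5 = 3)
    (hquad : 81 * (w : ℤ) ^ 2 - 36 * w * q ^ 2 + 8 * q ^ 4 = 5 * a ^ 2)
    (hcub : 9 * (w : ℤ) ^ 3 - 18 * w ^ 2 * q ^ 2 + 12 * w * q ^ 4 - 4 * q ^ 6 = 5 * c ^ 2) :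
    ¬ Odd w := by
  intro hw
  have h2 : IsCoprime (2 * q ^ 2) (w : ℤ) :=
    (Int.isCoprime_two_left.2 (by exact_mod_cast hw)).mul_left hwq.symm.pow_left
  have h8 : w % 8 = 7 := by
    obtain ⟨⟨k, rfl⟩, r, rfl⟩ := And.intro hw hq
    have hmod : ∀ k r c : ZMod 8, 9 * (2 * k + 1) ^ 3 - 18 * (2 * k + 1) ^ 2 * (2 * r + 1) ^ 2
        + 12 * (2 * k + 1) * (2 * r + 1) ^ 4 - 4 * (2 * r + 1) ^ 6 = 5 * c ^ 2 →
        2 * k + 1 = 7 := by decide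
    refine (ZMod.natCast_eq_natCast_iff' _ 7 8).1 ?_
    exact_mod_cast hmod k r c (by exact_mod_cast congrArg (Int.cast : ℤ → ZMod 8) hcub)
  refine jacobiSym_ne_neg_one_of_dvd (x := 5 * a) h2 ?_ (jacobiSym_ten_eq_neg_one h8 h5)
  exact ⟨405 * w - 180 * q ^ 2, by linear_combination -5 * hquad⟩

lemma not_even_of_quadratic_of_cubic {w : ℕ} {q a c : ℤ} (hq : Odd q) (hwq : IsCoprime (w : ℤ) q)
    (h5 : w % 5 = 2 ∨ w % 5 = 3)
    (hquad : 81 * (w : ℤ) ^ 2 - 36 * w * q ^ 2 + 8 * q ^ 4 = 5 * a ^ 2)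
    (hcub : 9 * (w : ℤ) ^ 3 - 18 * w ^ 2 * q ^ 2 + 12 * w * q ^ 4 - 4 * q ^ 6 = 5 * c ^ 2) :
    ¬ Even w := by
  intro hw
  obtain ⟨v, rfl⟩ := even_iff_two_dvd.1 hw
  push_cast at hwq hquad hcub
  have two_dvd_of {x y : ℤ} (hxy : 2 * y = 5 * x ^ 2) : 2 ∣ x :=
    Int.prime_two.dvd_of_dvd_pow (n := 2) (by omega)
  obtain ⟨a, rfl⟩ := two_dvd_of (x := a)
    (y := 162 * v ^ 2 - 36 * v * q ^ 2 + 4 * q ^ 4) (by linear_combination hquad)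
  obtain ⟨c, rfl⟩ := two_dvd_of (x := c)
    (y := 36 * v ^ 3 - 36 * v ^ 2 * q ^ 2 + 12 * v * q ^ 4 - 2 * q ^ 6)
    (by linear_combination hcub)
  have h4 : v % 4 = 3 := by
    obtain ⟨r, rfl⟩ := hq
    have hmod : ∀ v r a : ZMod 8, 81 * v ^ 2 - 18 * v * (2 * r + 1) ^ 2 + 2 * (2 * r + 1) ^ 4 =
        5 * a ^ 2 → 2 * v = 6 := by decide
    have h8 : 2 * v % 8 = 6 := by
      refine (ZMod.natCast_eq_natCast_iff' _ 6 8).1 ?_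
      have hquad' : 81 * (v : ℤ) ^ 2 - 18 * v * (2 * r + 1) ^ 2 + 2 * (2 * r + 1) ^ 4 =
        5 * a ^ 2 := by linarith
      exact_mod_cast hmod v r a (by exact_mod_cast congrArg (Int.cast : ℤ → ZMod 8) hquad')
    omega
  refine jacobiSym_ne_neg_one_of_dvd (x := 5 * c) (hwq.of_mul_left_right.symm.pow_left (m := 3))
    ?_ (jacobiSym_neg_five_eq_neg_one h4 (by omega))
  refine ⟨90 * v ^ 2 - 90 * v * q ^ 2 + 30 * q ^ 4, mul_left_cancel₀ four_ne_zero ?_⟩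
  linear_combination -5 * hcub

end QuadraticReciprocity

namespace IsCoverPoint

variable {p q a b : ℤ}

lemma odd_of_five (h : IsCoverPoint 5 p q a b) : Odd q := by
  by_contra hodd
  obtain ⟨r, rfl⟩ := even_iff_two_dvd.1 (Int.not_odd_iff_even.1 hodd)
  obtain ⟨k, rfl⟩ : Odd p := Int.isCoprime_two_right.1 h.isCoprime.of_mul_right_left
  have hmod : ∀ k r a : ZMod 8,
      (2 * k + 1) ^ 2 + 8 * (2 * k + 1) * (2 * r) ^ 2 + 20 * (2 * r) ^ 4 ≠ 5 * a ^ 2 := by decide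
  exact hmod k r a (by exact_mod_cast congrArg (Int.cast : ℤ → ZMod 8) h.quadratic)

lemma three_dvd_of_five (h : IsCoverPoint 5 p q a b) : 3 ∣ p := by
  have hmod : ∀ p q a b : ZMod 3, p ^ 2 + 8 * p * q ^ 2 + 20 * q ^ 4 = 5 * a ^ 2 →
      p ^ 3 - 108 * q ^ 6 = 5 * b ^ 2 → p = 0 := by decide
  refine (ZMod.intCast_zmod_eq_zero_iff_dvd p 3).1 (hmod p q a b ?_ ?_)
  · exact_mod_cast congrArg (Int.cast : ℤ → ZMod 3) h.quadratic
  · exact_mod_cast congrArg (Int.cast : ℤ → ZMod 3) h.cubic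

lemma exists_eq_nine_mul_sub_of_five (h : IsCoverPoint 5 p q a b) :
    ∃ (w : ℕ) (c : ℤ), p = 9 * w - 6 * q ^ 2 ∧
      9 * (w : ℤ) ^ 3 - 18 * w ^ 2 * q ^ 2 + 12 * w * q ^ 4 - 4 * q ^ 6 = 5 * c ^ 2 := by
  obtain ⟨r, rfl⟩ := h.three_dvd_of_five
  have hcubic := h.cubic
  obtain ⟨b, rfl⟩ : 3 ∣ b := Int.prime_three.dvd_of_dvd_pow (n := 2)
    ⟨2 * b ^ 2 - 9 * r ^ 3 + 36 * q ^ 6, by linarith⟩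
  obtain ⟨c, rfl⟩ : 3 ∣ b := Int.prime_three.dvd_of_dvd_pow (n := 2)
    ⟨2 * b ^ 2 - r ^ 3 + 4 * q ^ 6, by linarith⟩
  have hmod : ∀ r q c : ZMod 3, r ^ 3 - 4 * q ^ 6 = 15 * c ^ 2 → r + 2 * q ^ 2 = 0 := by decide
  obtain ⟨w, hw⟩ : 3 ∣ r + 2 * q ^ 2 := by
    have hrqc : r ^ 3 - 4 * q ^ 6 = 15 * c ^ 2 := by linarith
    refine (ZMod.intCast_zmod_eq_zero_iff_dvd _ 3).1 ?_
    exact_mod_cast hmod r q c (by exact_mod_cast congrArg (Int.cast : ℤ → ZMod 3) hrqc)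
  obtain rfl : r = 3 * w - 2 * q ^ 2 := by linarith
  have hwc : 9 * w ^ 3 - 18 * w ^ 2 * q ^ 2 + 12 * w * q ^ 4 - 4 * q ^ 6 = 5 * c ^ 2 := by
    linarith
  have hw_nonneg : 0 ≤ w := by
    by_contra! hneg
    have hq2 := sq_nonneg q
    have hcube : (3 * w - 2 * q ^ 2) ^ 3 < 0 := Odd.pow_neg (by decide) (by linarith)
    nlinarith [sq_nonneg c, pow_nonneg hq2 3]
  lift w to ℕ using hw_nonneg
  exact ⟨w, c, by ring, hwc⟩

lemma mod_five_of_five {w : ℕ} (h : IsCoverPoint 5 (9 * w - 6 * q ^ 2) q a b) :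
    w % 5 = 2 ∨ w % 5 = 3 := by
  have h5 : Prime (5 : ℤ) := by norm_num
  have hmod : ∀ w q : ZMod 5, q ≠ 0 → 11 * (9 * w - 6 * q ^ 2) + 13 * q ^ 2 = 0 →
      w = 2 ∨ w = 3 := by decide
  have hq : ¬ 5 ∣ q := (Prime.coprime_iff_not_dvd h5).1 h.isCoprime_left
  have hdvd := (ZMod.intCast_zmod_eq_zero_iff_dvd _ 5).2 (h.dvd_eleven_mul_add h5.squarefree)
  push_cast at hdvd
  exact (hmod w q (mt (ZMod.intCast_zmod_eq_zero_iff_dvd q 5).1 hq) hdvd).imp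
    (ZMod.natCast_eq_natCast_iff' w 2 5).1 (ZMod.natCast_eq_natCast_iff' w 3 5).1

theorem not_five : ¬ IsCoverPoint 5 p q a b := by
  intro h
  obtain ⟨w, c, rfl, hcub⟩ := h.exists_eq_nine_mul_sub_of_five
  have hwq : IsCoprime (w : ℤ) q := by
    have := h.isCoprime.add_mul_left_left (6 * q)
    rw [show 9 * (w : ℤ) - 6 * q ^ 2 + q * (6 * q) = 9 * w by ring] at this
    exact this.of_mul_left_right
  have hquad : 81 * (w : ℤ) ^ 2 - 36 * w * q ^ 2 + 8 * q ^ 4 = 5 * a ^ 2 := by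
    linear_combination h.quadratic
  rcases Nat.even_or_odd w with hw | hw
  · exact not_even_of_quadratic_of_cubic h.odd_of_five hwq h.mod_five_of_five hquad hcub hw
  · exact not_odd_of_quadratic_of_cubic h.odd_of_five hwq h.mod_five_of_five hquad hcub hw

theorem eq_one {d : ℤ} (h : IsCoverPoint d p q a b) (hd : Squarefree d) (hpos : 0 < d) :
    d = 1 := by
  have hcop : IsCoprime d 17 :=
    ((Prime.coprime_iff_not_dvd (by norm_num)).2 (h.not_seventeen_dvd_left hd)).symm
  have hd5 : d ∣ 5 := hcop.dvd_of_dvd_mul_right (h.dvd_eightyfive hd)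
  lift d to ℕ using hpos.le
  rcases (Nat.dvd_prime Nat.prime_five).1 (by exact_mod_cast hd5) with rfl | rfl
  · rfl
  · exact absurd h not_five

end IsCoverPoint

theorem sq_ne_quadratic_mul_cube_sub_108 (u y : ℚ) :
    y ^ 2 ≠ (u ^ 2 + 8 * u + 20) * (u ^ 3 - 108) := by
  intro h
  obtain ⟨d, p, q, a, b, hpos, hd, hcover⟩ := exists_isCoverPoint h
  obtain rfl := hcover.eq_one hd hpos
  have hq : (q : ℚ) ≠ 0 := Int.cast_ne_zero.2 hcover.ne_zero
  have hcubic : (p ^ 3 - 108 * q ^ 6 : ℚ) = b ^ 2 := by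
    exact_mod_cast hcover.cubic.trans (one_mul _)
  refine sq_ne_cube_sub_108 (p / q ^ 2) (b / q ^ 3) ?_
  field_simp
  linear_combination -hcubic

end CurvesC4C5

/-- The curves `𝒞₄ : x² + 256t³ + 576t² + 432t + 540 = 0` and
`𝒞₅ : x² + 16(16t² − 8t + 5)(64t³ + 144t² + 108t + 135) = 0` have no rational points. -/
theorem curves_C4_C5_no_points :
    (¬ ∃ t x : ℚ, x ^ 2 + 256 * t ^ 3 + 576 * t ^ 2 + 432 * t + 540 = 0) ∧
    (¬ ∃ t x : ℚ, x ^ 2 + 16 * (16 * t ^ 2 - 8 * t + 5) *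
      (64 * t ^ 3 + 144 * t ^ 2 + 108 * t + 135) = 0) := by
  constructor
  · rintro ⟨t, x, h⟩
    exact CurvesC4C5.sq_ne_cube_sub_108 (-(4 * t + 3)) (x / 2) (by linear_combination h / 4)
  · rintro ⟨t, x, h⟩
    exact CurvesC4C5.sq_ne_quadratic_mul_cube_sub_108 (-(4 * t + 3)) (x / 4)
      (by linear_combination h / 16)
end

section
/- The set of pairs (t,x) ∈ ℚ × ℚ satisfying x⁴ − p(t)x² + q(t) = 0 is exactly {(−5/4, 0), (1/4, 0)}. -/
/-!
Solving the equation for `x ^ 2` and parametrizing a conic reduces the problem to the genus-four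
curve `z ^ 2 = (m ^ 2 + 1) * (m ^ 2 + 6m - 1) * G(m, 1)`, with `G` a form of degree six. By
descent, the three factors are squares up to finitely many twists. Up to the symmetry
`(a, b) ↦ (-b, a)`, all but the trivial twist are obstructed modulo 7, 8, 11, 16 or 25. In the
trivial twist, the conditions `a ^ 2 + b ^ 2 = c ^ 2` and `a ^ 2 + 6ab - b ^ 2 = e ^ 2` define a
curve of genus one, isomorphic to `E : y ^ 2 = x ^ 3 - 160x`, whose group is generated by
`Q = (-4, 24)` and the 2-torsion point `T = (0, 0)`. Translation by `T` changes the signs of `c`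
and `e`, so one may assume that the point is `n • Q`. If `n` were even and nonzero, then, by an
argument in the style of Cohn, there would be a prime modulo which 298 is not a square and `n • Q`
reduces to a 2-torsion point with `x ^ 2 = 160`. Then 10 is a square modulo this prime and
`b = 3a`, so that `G(1, 3) = 10 * 298` would be a square, a contradiction. Hence `n` is odd.
Replacing `c` by `-c` changes `n` to `1 - n`, which would have to be odd as well.
-/

namespace CurveA4

section Affine

open WeierstrassCurve.Affine

variable {F : Type*} [Field F] {W : WeierstrassCurve.Affine F} {P P' : W.Point}
  {x x' y y' ℓ : F}

/-- `HasCoords P x y` says that `P` is the finite point with coordinates `(x, y)`; the proof that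
`(x, y)` is a nonsingular point of the curve is hidden, so that coordinates can be rewritten. -/
def HasCoords (P : W.Point) (x y : F) : Prop := ∃ h, P = .some x y h

namespace HasCoords

lemma inj (h : HasCoords P x y) (h' : HasCoords P' x y) : P = P' := by
  obtain ⟨_, rfl⟩ := h
  obtain ⟨_, rfl⟩ := h'
  rfl

lemma ne_zero (h : HasCoords P x y) : P ≠ 0 := by
  obtain ⟨h, rfl⟩ := h
  exact Point.some_ne_zero h

lemma neg (h : HasCoords P x y) : HasCoords (-P) x (W.negY x y) := by
  obtain ⟨h, rfl⟩ := h
  exact ⟨_, Point.neg_some h⟩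

variable [DecidableEq F]

lemma add (h : HasCoords P x y) (h' : HasCoords P' x' y') (hx : x ≠ x')
    (hℓ : ℓ * (x - x') = y - y') :
    HasCoords (P + P') (W.addX x x' ℓ) (W.addY x x' y ℓ) := by
  obtain ⟨h, rfl⟩ := h
  obtain ⟨h', rfl⟩ := h'
  obtain rfl : W.slope x x' y y' = ℓ := by
    rw [slope_of_X_ne hx, div_eq_iff (sub_ne_zero.2 hx), hℓ]
  exact ⟨_, Point.add_of_X_ne hx⟩

lemma double (h : HasCoords P x y) (hy : y ≠ W.negY x y)
    (hℓ : ℓ * (y - W.negY x y) = 3 * x ^ 2 + 2 * W.a₂ * x + W.a₄ - W.a₁ * y) :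
    HasCoords (P + P) (W.addX x x ℓ) (W.addY x x y ℓ) := by
  obtain ⟨h, rfl⟩ := h
  obtain rfl : W.slope x x y y = ℓ := by
    rw [slope_of_Y_ne rfl hy, div_eq_iff (sub_ne_zero.2 hy), hℓ]
  exact ⟨_, Point.add_self_of_Y_ne hy⟩

end HasCoords

end Affine

section Reduction

open WeierstrassCurve.Projective
open WeierstrassCurve.Projective.Point (fromAffine toAffineAddEquiv)

variable {R K k : Type*} [CommRing R] [Field K] [Field k] [Algebra R K] [Algebra R k]
  {W : WeierstrassCurve R} {P P' : (W.baseChange K).toAffine.Point} {v v' : Fin 3 → k}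

/-- The class of homogeneous coordinates of the point `P`. -/
def homogeneousClass (P : (W.baseChange K).toAffine.Point) : PointClass K :=
  (fromAffine (W' := (W.baseChange K).toProjective) P).point

/-- `ReducesTo P v` says that `P ∈ W(K)` has homogeneous coordinates in `R` whose image in `k` is
a multiple by a unit of `v`. When `v ≠ 0` this is reduction of points along `R → k`. -/
def ReducesTo (P : (W.baseChange K).toAffine.Point) (v : Fin 3 → k) : Prop :=
  ∃ V : Fin 3 → R, homogeneousClass P = ⟦algebraMap R K ∘ V⟧ ∧ algebraMap R k ∘ V ≈ v

lemma homogeneousClass_neg (P : (W.baseChange K).toAffine.Point) :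
    homogeneousClass (-P) = (W.baseChange K).toProjective.negMap (homogeneousClass P) := by
  classical
  rw [homogeneousClass, homogeneousClass, ← Point.neg_point]
  exact congrArg Point.point (map_neg (toAffineAddEquiv (W.baseChange K).toProjective).symm P)

lemma homogeneousClass_add [DecidableEq K] (P P' : (W.baseChange K).toAffine.Point) :
    homogeneousClass (P + P') =
      (W.baseChange K).toProjective.addMap (homogeneousClass P) (homogeneousClass P') := by
  rw [homogeneousClass, homogeneousClass, homogeneousClass, ← Point.add_point]
  exact congrArg Point.point (map_add (toAffineAddEquiv (W.baseChange K).toProjective).symm P P')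

namespace ReducesTo

lemma congr (h : ReducesTo P v) (hv : v ≈ v') : ReducesTo P v' :=
  let ⟨V, hV, hVv⟩ := h
  ⟨V, hV, Setoid.trans hVv hv⟩

lemma of_hasCoords {x y : K} (V : Fin 3 → R) (hP : HasCoords P x y)
    (hV : algebraMap R K (V 2) ≠ 0) (hx : x * algebraMap R K (V 2) = algebraMap R K (V 0))
    (hy : y * algebraMap R K (V 2) = algebraMap R K (V 1)) :
    ReducesTo P (algebraMap R k ∘ V) := by
  obtain ⟨hxy, rfl⟩ := hP
  refine ⟨V, ?_, Setoid.refl _⟩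
  rw [homogeneousClass, Point.fromAffine_some]
  refine Quotient.sound (equiv_of_X_eq_of_Y_eq one_ne_zero hV ?_ ?_) <;> simp [hx, hy]

lemma linear_relation [FaithfulSMul R K] {x y : K} {α β γ : R} (h : ReducesTo P v)
    (hP : HasCoords P x y)
    (hxy : algebraMap R K α * x + algebraMap R K β * y + algebraMap R K γ = 0) :
    algebraMap R k α * v 0 + algebraMap R k β * v 1 + algebraMap R k γ * v 2 = 0 := by
  obtain ⟨V, hV, u, hVv⟩ := h
  obtain ⟨_, rfl⟩ := hP
  obtain ⟨w, hw⟩ := Quotient.exact hV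
  have coord (i : Fin 3) : (w : K) * algebraMap R K (V i) = ![x, y, 1] i := congrFun hw i
  have hR : α * V 0 + β * V 1 + γ * V 2 = 0 := by
    apply FaithfulSMul.algebraMap_injective R K
    apply w.isUnit.mul_right_injective
    have h0 := coord 0
    have h1 := coord 1
    have h2 := coord 2
    simp only [Matrix.cons_val] at h0 h1 h2
    simp only [map_add, map_mul, map_zero, mul_zero]
    linear_combination hxy + algebraMap R K α * h0 + algebraMap R K β * h1 + algebraMap R K γ * h2
  have hk := congrArg (algebraMap R k) hR
  have coord' (i : Fin 3) : (u : k) * v i = algebraMap R k (V i) := congrFun hVv i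
  apply u.isUnit.mul_right_injective
  simp only [map_add, map_mul, map_zero, ← coord'] at hk
  simp only [mul_zero]
  linear_combination hk

lemma neg (h : ReducesTo P v) : ReducesTo (-P) ((W.baseChange k).toProjective.neg v) := by
  obtain ⟨V, hV, hVv⟩ := h
  refine ⟨W.toProjective.neg V, ?_, ?_⟩
  · rw [homogeneousClass_neg, hV, negMap_eq, ← WeierstrassCurve.Projective.map_neg]
    rfl
  · rw [← WeierstrassCurve.Projective.map_neg]
    exact neg_equiv hVv

variable [DecidableEq K]

lemma double (h : ReducesTo P v) : ReducesTo (P + P) ((W.baseChange k).toProjective.dblXYZ v) := by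
  obtain ⟨V, hV, u, hVv⟩ := h
  refine ⟨W.toProjective.dblXYZ V, ?_, u ^ 4, ?_⟩
  · rw [homogeneousClass_add, hV, addMap_eq, add_self, ← map_dblXYZ]
    rfl
  · rw [← map_dblXYZ, ← hVv]
    exact (dblXYZ_smul v (u : k)).symm

lemma add [FaithfulSMul R K] (h : ReducesTo P v) (h' : ReducesTo P' v')
    (hv : (W.baseChange k).toProjective.addXYZ v v' ≠ 0) :
    ReducesTo (P + P') ((W.baseChange k).toProjective.addXYZ v v') := by
  obtain ⟨V, hV, u, hVv⟩ := h
  obtain ⟨V', hV', u', hVv'⟩ := h'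
  have hred : algebraMap R k ∘ W.toProjective.addXYZ V V' =
      ((u : k) * u') ^ 2 • (W.baseChange k).toProjective.addXYZ v v' := by
    rw [← map_addXYZ, ← hVv, ← hVv']
    exact addXYZ_smul v v' (u : k) (u' : k)
  have hne : ¬ algebraMap R K ∘ V ≈ algebraMap R K ∘ V' := by
    rintro ⟨w, hw⟩
    have h0 : algebraMap R K ∘ W.toProjective.addXYZ V V' = 0 := by
      have := addXYZ_smul (W' := (W.baseChange K).toProjective) (algebraMap R K ∘ V')
        (algebraMap R K ∘ V') (w : K) 1
      rw [addXYZ_self, one_smul] at this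
      rw [← map_addXYZ, ← hw]
      exact this.trans (by ext i; fin_cases i <;> simp)
    have h1 : W.toProjective.addXYZ V V' = 0 := by
      ext i
      exact FaithfulSMul.algebraMap_injective R K (by simpa using congrFun h0 i)
    rw [h1] at hred
    refine smul_ne_zero (pow_ne_zero 2 (mul_ne_zero u.ne_zero u'.ne_zero)) hv (hred.symm.trans ?_)
    ext i
    simp
  refine ⟨W.toProjective.addXYZ V V', ?_, (u * u') ^ 2, hred.symm⟩
  rw [homogeneousClass_add, hV, hV', addMap_eq, add_of_not_equiv hne, ← map_addXYZ]
  rfl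

lemma add_kernel [FaithfulSMul R K] (h : ReducesTo P v) (hv : v 2 ≠ 0)
    (h' : ReducesTo P' (![0, 1, 0] : Fin 3 → k)) : ReducesTo (P + P') v := by
  have hadd : (W.baseChange k).toProjective.addXYZ v ![0, 1, 0] = -v 2 • v := by
    rw [addXYZ_of_Z_eq_zero_right equation_zero rfl]
    simp
  have hv' : -v 2 • v ≠ 0 := smul_ne_zero (neg_ne_zero.2 hv) fun h0 ↦ hv (congrFun h0 2)
  have := h.add h' (hadd ▸ hv')
  rw [hadd] at this
  exact this.congr (smul_equiv v (neg_ne_zero.2 hv).isUnit)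

lemma add_zsmul_kernel [FaithfulSMul R K] (h : ReducesTo P v) (hv : v 2 ≠ 0)
    (h' : ReducesTo P' (![0, 1, 0] : Fin 3 → k)) (n : ℤ) : ReducesTo (P + n • P') v := by
  have hneg : ReducesTo (-P') (![0, 1, 0] : Fin 3 → k) := by
    refine h'.neg.congr ?_
    rw [neg_of_Z_eq_zero equation_zero rfl]
    exact smul_equiv _ (by simp)
  induction n with
  | zero => simpa using h
  | succ n ih => rw [add_zsmul, one_zsmul, ← add_assoc]; exact ih.add_kernel hv h'
  | pred n ih => rw [sub_zsmul, one_zsmul, ← add_assoc]; exact ih.add_kernel hv hneg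

end ReducesTo

end Reduction

section Curve

/-- The elliptic curve `y² = x³ − 160x`. -/
def E : WeierstrassCurve ℤ := ⟨0, 0, 0, -160, 0⟩

/-- The group `E(ℚ)`. -/
abbrev Pt : Type := (E.baseChange ℚ).toAffine.Point

variable {P P' : Pt} {x x' y y' ℓ : ℚ}

lemma equation_iff : (E.baseChange ℚ).toAffine.Equation x y ↔ y ^ 2 = x ^ 3 - 160 * x := by
  rw [WeierstrassCurve.Affine.equation_iff]
  simp [E, sub_eq_add_neg]

lemma nonsingular (h : y ^ 2 = x ^ 3 - 160 * x) : (E.baseChange ℚ).toAffine.Nonsingular x y := by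
  have hΔ : E.Δ = 2 ^ 21 * 5 ^ 3 := rfl
  refine (WeierstrassCurve.Affine.equation_iff_nonsingular_of_Δ_ne_zero ?_).1 (equation_iff.2 h)
  exact (E.map_Δ _).trans_ne (by simp [hΔ])

lemma negY_eq (x y : ℚ) : (E.baseChange ℚ).toAffine.negY x y = -y := by
  simp [E, WeierstrassCurve.Affine.negY]

lemma addX_eq (x x' ℓ : ℚ) : (E.baseChange ℚ).toAffine.addX x x' ℓ = ℓ ^ 2 - x - x' := by
  simp [E, WeierstrassCurve.Affine.addX]

lemma addY_eq (x x' y ℓ : ℚ) :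
    (E.baseChange ℚ).toAffine.addY x x' y ℓ = ℓ * (2 * x + x' - ℓ ^ 2) - y := by
  rw [WeierstrassCurve.Affine.addY, negY_eq, WeierstrassCurve.Affine.negAddY, addX_eq]
  ring

lemma exists_hasCoords (h : y ^ 2 = x ^ 3 - 160 * x) : ∃ P : Pt, HasCoords P x y :=
  ⟨_, nonsingular h, rfl⟩

lemma eq_zero_or_hasCoords (P : Pt) : P = 0 ∨ ∃ x y, HasCoords P x y := by
  rcases P with _ | ⟨x, y, h⟩
  · exact .inl rfl
  · exact .inr ⟨x, y, h, rfl⟩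

namespace HasCoords

lemma sq_eq (h : HasCoords P x y) : y ^ 2 = x ^ 3 - 160 * x :=
  let ⟨h, _⟩ := h
  equation_iff.1 h.1

lemma neg_curve (h : HasCoords P x y) : HasCoords (-P) x (-y) :=
  negY_eq x y ▸ h.neg

lemma add_curve (h : HasCoords P x y) (h' : HasCoords P' x' y') (hx : x ≠ x')
    (hℓ : ℓ * (x - x') = y - y') :
    HasCoords (P + P') (ℓ ^ 2 - x - x') (ℓ * (2 * x + x' - ℓ ^ 2) - y) := by
  have := h.add h' hx hℓ
  rwa [addX_eq, addY_eq] at this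

lemma double_curve (h : HasCoords P x y) (hy : y ≠ 0) (hℓ : ℓ * (2 * y) = 3 * x ^ 2 - 160) :
    HasCoords (P + P) (ℓ ^ 2 - 2 * x) (ℓ * (3 * x - ℓ ^ 2) - y) := by
  convert h.double (ℓ := ℓ) ?_ ?_ using 1
  · rw [addX_eq]
    ring
  · rw [addY_eq]
    ring
  · rw [negY_eq]
    exact fun h0 ↦ hy (by linarith)
  · rw [negY_eq]
    simp only [E, WeierstrassCurve.Affine.baseChange_a₁,
      WeierstrassCurve.Affine.baseChange_a₂, WeierstrassCurve.Affine.baseChange_a₄,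
      algebraMap_int_eq, eq_intCast]
    push_cast
    linear_combination hℓ

lemma add_self_of_y_eq_zero (h : HasCoords P x 0) : P + P = 0 :=
  add_eq_zero_iff_eq_neg.2 (h.inj (by simpa using h.neg_curve))

end HasCoords

end Curve

section Arithmetic

lemma exists_intCast_eq_of_pow_eq {z : ℚ} {n : ℤ} {k : ℕ} (hk : k ≠ 0) (h : z ^ k = n) :
    ∃ N : ℤ, z = N := by
  have hint : IsIntegral ℤ (z ^ k) := h ▸ isIntegral_algebraMap (x := n)
  obtain ⟨N, hN⟩ := IsIntegrallyClosed.exists_algebraMap_eq_of_isIntegral_pow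
    (Nat.pos_of_ne_zero hk) hint
  exact ⟨N, hN.symm⟩

lemma exists_int_of_sq_eq_quartic {z r : ℚ} {α β : ℤ} (h : z ^ 2 = α * r ^ 4 + β) :
    ∃ N : ℤ, z * r.den ^ 2 = N ∧ N ^ 2 = α * r.num ^ 4 + β * r.den ^ 4 := by
  have key : (z * r.den ^ 2) ^ 2 = ((α * r.num ^ 4 + β * r.den ^ 4 : ℤ) : ℚ) := by
    push_cast
    rw [← Rat.mul_den_eq_num r]
    linear_combination (r.den : ℚ) ^ 4 * h
  obtain ⟨N, hN⟩ := exists_intCast_eq_of_pow_eq two_ne_zero key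
  refine ⟨N, hN, ?_⟩
  rw [hN] at key
  exact_mod_cast key

lemma exists_squarefree_mul_sq {n m k : ℤ} (hn : n ≠ 0) (h : n * m = k ^ 2) :
    ∃ d e f : ℤ, Squarefree d ∧ n = d * e ^ 2 ∧ m = d * f ^ 2 := by
  obtain ⟨a, b, hab, ha⟩ := Nat.sq_mul_squarefree n.natAbs
  have hnab : n = n.sign * a * b ^ 2 := by
    conv_lhs => rw [← Int.sign_mul_natAbs n, ← hab]
    push_cast
    ring
  set d := n.sign * a with hd
  have hdn : d.natAbs = a := by simp [hd, Int.natAbs_mul, Int.natAbs_sign_of_ne_zero hn]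
  have hsq : Squarefree d := Int.squarefree_natAbs.1 (hdn ▸ ha)
  have hb : (b : ℤ) ≠ 0 := fun hb ↦ hn (by rw [hnab, hb]; ring)
  obtain ⟨k', rfl⟩ : (b : ℤ) ∣ k := by
    rw [← Int.pow_dvd_pow_iff two_ne_zero, ← h, hnab]
    exact ⟨d * m, by ring⟩
  have hdm : d * m = k' ^ 2 := by
    apply mul_left_cancel₀ (pow_ne_zero 2 hb)
    linear_combination h - m * hnab
  obtain ⟨f, rfl⟩ := (hsq.dvd_pow_iff_dvd two_ne_zero).1 (Dvd.intro _ hdm)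
  refine ⟨d, b, f, hsq, hnab, mul_left_cancel₀ hsq.ne_zero ?_⟩
  linear_combination hdm

lemma exists_coprime_pow_factors {A B m s k : ℕ} (hk : k ≠ 0) (hm : m ≠ 0) (hAB : A.Coprime B)
    (h : A * B = m * s ^ k) :
    ∃ d e p q, d * e = m ∧ p * q = s ∧ p.Coprime q ∧ A = d * p ^ k ∧ B = e * q ^ k := by
  obtain ⟨A', hA⟩ := Nat.gcd_dvd_left A m
  obtain ⟨B', hB⟩ := Nat.gcd_dvd_left B m
  have hde : A.gcd m * B.gcd m = m := by
    rw [Nat.gcd_comm A, Nat.gcd_comm B, ← hAB.gcd_mul, h, Nat.gcd_mul_right_right]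
  have hAB' : A' * B' = s ^ k := by
    apply Nat.eq_of_mul_eq_mul_left (Nat.pos_of_ne_zero hm)
    calc m * (A' * B') = A.gcd m * A' * (B.gcd m * B') := by rw [mul_mul_mul_comm, hde]
      _ = m * s ^ k := by rw [← hA, ← hB, h]
  have hcop : A'.Coprime B' :=
    (hAB.coprime_dvd_left (Dvd.intro_left _ hA.symm)).coprime_dvd_right (Dvd.intro_left _ hB.symm)
  obtain ⟨p, rfl⟩ := exists_eq_pow_of_mul_eq_pow (Nat.isUnit_iff.2 hcop) hAB'
  obtain ⟨q, rfl⟩ := exists_eq_pow_of_mul_eq_pow (Nat.isUnit_iff.2 hcop.symm)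
    ((mul_comm ..).trans hAB')
  refine ⟨A.gcd m, B.gcd m, p, q, hde, ?_, ?_, hA, hB⟩
  · exact Nat.pow_left_injective hk ((mul_pow ..).trans hAB')
  · rwa [Nat.coprime_pow_left_iff (Nat.pos_of_ne_zero hk),
      Nat.coprime_pow_right_iff (Nat.pos_of_ne_zero hk)] at hcop

lemma sq_mod_sixteen (n : ℤ) :
    n % 2 = 0 ∧ (n ^ 2 % 16 = 0 ∨ n ^ 2 % 16 = 4) ∨
      n % 2 = 1 ∧ (n ^ 2 % 16 = 1 ∨ n ^ 2 % 16 = 9) := by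
  have key : ∀ r ∈ Finset.Ico (0 : ℤ) 16, r % 2 = 0 ∧ (r ^ 2 % 16 = 0 ∨ r ^ 2 % 16 = 4) ∨
      r % 2 = 1 ∧ (r ^ 2 % 16 = 1 ∨ r ^ 2 % 16 = 9) := by decide
  have hr := key (n % 16) (Finset.mem_Ico.2 ⟨by omega, by omega⟩)
  rwa [(Int.mod_modEq n 16).pow 2, Int.emod_emod_of_dvd n (by norm_num)] at hr

lemma pow_four_mod_sixteen (n : ℤ) :
    n % 2 = 0 ∧ n ^ 4 % 16 = 0 ∨ n % 2 = 1 ∧ n ^ 4 % 16 = 1 := by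
  have h : n ^ 4 = n ^ 2 * n ^ 2 := by ring
  rcases sq_mod_sixteen n with ⟨hn, h0 | h0⟩ | ⟨hn, h0 | h0⟩ <;> simp [hn, h, Int.mul_emod, h0]

lemma den_mul_den_dvd {g h k : ℤ} (hk : k ≠ 0) (hd : k ∣ g * h) :
    ((g : ℚ) / k).den * ((h : ℚ) / k).den ∣ k.natAbs := by
  have key (g : ℤ) : ((g : ℚ) / k).den * k.natAbs.gcd g.natAbs = k.natAbs := by
    rw [← Rat.divInt_eq_div, Rat.den_divInt, if_neg hk]
    exact Nat.div_mul_cancel (Nat.gcd_dvd_left _ _)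
  have hdvd : k.natAbs ∣ k.natAbs.gcd g.natAbs * k.natAbs.gcd h.natAbs := by
    rw [Nat.dvd_gcd_mul_gcd_iff_dvd_mul, ← Int.natAbs_mul]
    exact Int.natAbs_dvd_natAbs.2 hd
  apply Nat.dvd_of_mul_dvd_mul_right (Int.natAbs_pos.2 hk)
  calc _ ∣ ((g : ℚ) / k).den * ((h : ℚ) / k).den *
        (k.natAbs.gcd g.natAbs * k.natAbs.gcd h.natAbs) := mul_dvd_mul_left _ hdvd
    _ = k.natAbs * k.natAbs := by rw [mul_mul_mul_comm, key, key]

end Arithmetic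

section Descent

variable {u v p q s : ℕ}

lemma odd_of_pow_four_eq (hus : u.Coprime s) (h : u ^ 4 = v ^ 2 + 160 * s ^ 4) : u % 2 = 1 := by
  by_contra hu
  obtain ⟨u', rfl⟩ : 2 ∣ u := by omega
  have hs : ¬ 2 ∣ s := fun hs ↦ by simpa [hus] using Nat.dvd_gcd (dvd_mul_right 2 u') hs
  obtain ⟨v', rfl⟩ : 4 ∣ v := by
    rw [← Nat.pow_dvd_pow_iff two_ne_zero, Nat.dvd_iff_mod_eq_zero]
    have : 16 * u' ^ 4 = v ^ 2 + 160 * s ^ 4 := by rw [← h]; ring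
    omega
  have h' : u' ^ 4 = v' ^ 2 + 10 * s ^ 4 := by linarith
  have := sq_mod_sixteen v'
  have := pow_four_mod_sixteen u'
  have := pow_four_mod_sixteen s
  zify at h'
  omega

lemma eq_one_or_eq_forty {d e : ℕ} (hu : u % 2 = 1) (hde : d * e = 40)
    (h : u ^ 2 = d * p ^ 4 + e * q ^ 4) : d = 1 ∧ e = 40 ∨ d = 40 ∧ e = 1 := by
  have := sq_mod_sixteen u
  have := pow_four_mod_sixteen p
  have := pow_four_mod_sixteen q
  have hmem : (d, e) ∈ Nat.divisorsAntidiagonal 40 := Nat.mem_divisorsAntidiagonal.2 ⟨hde, by simp⟩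
  zify at h
  fin_cases hmem <;> omega

lemma coprime_of_mul_eq_forty_mul {u v A m : ℕ} (hu : u % 2 = 1) (hum : u.Coprime m)
    (hA : u ^ 2 = 2 * A + v) (hAm : A * (A + v) = 40 * m) : A.Coprime (A + v) := by
  set g := A.gcd (A + v) with hg
  have hgA : g ∣ A := Nat.gcd_dvd_left ..
  have hgv : g ∣ A + v := Nat.gcd_dvd_right ..
  have hgu : g ∣ u ^ 2 := by
    rw [hA, two_mul, add_assoc]
    exact dvd_add hgA hgv
  have hgm : (g ^ 2).Coprime m := ((hum.pow_left 2).coprime_dvd_left hgu).pow_left 2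
  have hg40 : g ^ 2 ∣ 40 := hgm.dvd_of_dvd_mul_right (hAm ▸ pow_two g ▸ mul_dvd_mul hgA hgv)
  have hg_odd : Odd g := (Nat.odd_iff.2 hu).pow.of_dvd_nat hgu
  have hg_le : g ≤ 6 := by nlinarith [Nat.le_of_dvd (by norm_num) hg40]
  change g = 1
  clear_value g
  interval_cases g <;> revert hg40 hg_odd <;> decide

lemma exists_sq_eq_add_forty (hs : s ≠ 0) (hus : u.Coprime s)
    (h : u ^ 4 = v ^ 2 + 160 * s ^ 4) :
    ∃ p q : ℕ, p * q = s ∧ u ^ 2 = p ^ 4 + 40 * q ^ 4 := by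
  have hu := odd_of_pow_four_eq hus h
  have hlt : v < u ^ 2 := by
    have : 0 < s ^ 4 := by positivity
    nlinarith
  have hpar : Even (u ^ 2) ↔ Even v := by
    have := congrArg Even h
    simpa [parity_simps, show Even 160 by decide] using this
  obtain ⟨A, hA⟩ : ∃ A, u ^ 2 = 2 * A + v := ⟨(u ^ 2 - v) / 2, by
    rw [Nat.even_iff, Nat.even_iff] at hpar; omega⟩
  have hAB : A * (A + v) = 40 * s ^ 4 := by
    have : u ^ 4 = (2 * A + v) ^ 2 := by rw [← hA]; ring
    nlinarith
  have hcop : A.Coprime (A + v) :=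
    coprime_of_mul_eq_forty_mul hu (hus.pow_right 4) hA hAB
  obtain ⟨d, e, p, q, hde, hpq, -, hdA, heB⟩ :=
    exists_coprime_pow_factors four_ne_zero (by norm_num) hcop hAB
  have hsum : u ^ 2 = d * p ^ 4 + e * q ^ 4 := by rw [hA, ← hdA, ← heB]; ring
  rcases eq_one_or_eq_forty hu hde hsum with ⟨rfl, rfl⟩ | ⟨rfl, rfl⟩
  · exact ⟨p, q, hpq, by linarith⟩
  · exact ⟨q, p, mul_comm p q ▸ hpq, by linarith⟩

lemma exists_eq_pow_four_add_ten (hup : u.Coprime p) (hq : q ≠ 0)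
    (h : u ^ 2 = p ^ 4 + 40 * q ^ 4) :
    ∃ a b : ℕ, a * b = q ∧ a.Coprime b ∧ u = a ^ 4 + 10 * b ^ 4 ∧
      (p ^ 2 + 10 * b ^ 4 = a ^ 4 ∧ 2 ∣ b ∨ p ^ 2 + a ^ 4 = 10 * b ^ 4) := by
  have hlt : p ^ 2 < u := by
    have : 0 < q ^ 4 := by positivity
    nlinarith
  have hpar : Even u ↔ Even (p ^ 2) := by
    have := congrArg Even h
    simpa [parity_simps, show Even 40 by decide] using this
  obtain ⟨C, hC⟩ : ∃ C, u = 2 * C + p ^ 2 := ⟨(u - p ^ 2) / 2, by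
    rw [Nat.even_iff, Nat.even_iff] at hpar; omega⟩
  have hprod : C * (C + p ^ 2) = 10 * q ^ 4 := by
    rw [hC] at h; nlinarith
  have hcop : C.Coprime (C + p ^ 2) := by
    have : (2 * C + p ^ 2).Coprime (p ^ 2) := hC ▸ hup.pow_right 2
    simp only [Nat.coprime_add_self_left, Nat.coprime_self_add_right] at this ⊢
    exact this.coprime_mul_left
  have hp : p % 2 = 1 := by
    rw [← Nat.not_even_iff]
    exact fun hp ↦ Nat.not_coprime_of_dvd_of_dvd one_lt_two
      (hpar.2 (hp.pow_of_ne_zero two_ne_zero)).two_dvd hp.two_dvd hup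
  obtain ⟨d, e, a, b, hde, hab, hc, hd, he⟩ :=
    exists_coprime_pow_factors four_ne_zero (by norm_num) hcop hprod
  have hsub : p ^ 2 + d * a ^ 4 = e * b ^ 4 := by omega
  have hu : u = d * a ^ 4 + e * b ^ 4 := by omega
  have := sq_mod_sixteen p
  have := pow_four_mod_sixteen a
  have := pow_four_mod_sixteen b
  zify at hsub
  have hcases : d = 10 ∧ e = 1 ∧ 2 ∣ a ∨ d = 1 ∧ e = 10 := by
    have hmem : (d, e) ∈ Nat.divisorsAntidiagonal 10 :=
      Nat.mem_divisorsAntidiagonal.2 ⟨hde, by simp⟩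
    clear hd he hu
    fin_cases hmem <;> omega
  rcases hcases with ⟨rfl, rfl, ha⟩ | ⟨rfl, rfl⟩
  · exact ⟨b, a, mul_comm a b ▸ hab, hc.symm, by omega, .inl ⟨by omega, ha⟩⟩
  · exact ⟨a, b, hab, hc, by omega, .inr (by omega)⟩

/-- This halves a point of `E` whose `x`-coordinate is the square `(u / s) ^ 2`. -/
lemma exists_descent_of_pow_four_eq (hs : s ≠ 0) (hus : u.Coprime s)
    (h : u ^ 4 = v ^ 2 + 160 * s ^ 4) :
    ∃ p a b : ℕ, s = p * (a * b) ∧ a.Coprime b ∧ u = a ^ 4 + 10 * b ^ 4 ∧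
      (p ^ 2 + 10 * b ^ 4 = a ^ 4 ∧ 2 ∣ b ∨ p ^ 2 + a ^ 4 = 10 * b ^ 4) := by
  obtain ⟨p, q, rfl, hu⟩ := exists_sq_eq_add_forty hs hus h
  obtain ⟨a, b, rfl, hab⟩ := exists_eq_pow_four_add_ten (Nat.coprime_mul_iff_right.1 hus).1
    (right_ne_zero_of_mul hs) hu
  exact ⟨p, a, b, rfl, hab⟩

lemma exists_half_factors {u v n : ℤ} (hun : IsCoprime u n) (h : v ^ 2 = -u ^ 4 + 10 * n ^ 4) :
    ∃ g k m : ℤ, 2 * g = v - 3 * (u * n) ∧ 2 * k = v + 3 * (u * n) ∧ 4 * m = n ^ 2 - u ^ 2 ∧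
      m ∣ g * k := by
  have hpar : ¬ (u % 2 = 0 ∧ n % 2 = 0) := fun ⟨hu, hn⟩ ↦ Int.prime_two.not_isUnit
    (hun.isUnit_of_dvd' (Int.dvd_of_emod_eq_zero hu) (Int.dvd_of_emod_eq_zero hn))
  have hu4 := pow_four_mod_sixteen u
  have hn4 := pow_four_mod_sixteen n
  have hu2 := sq_mod_sixteen u
  have hn2 := sq_mod_sixteen n
  have hv2 := sq_mod_sixteen v
  have hun1 : u * n % 2 = 1 := by
    rw [Int.mul_emod, show u % 2 = 1 by omega, show n % 2 = 1 by omega]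
    rfl
  obtain ⟨g, hg⟩ : 2 ∣ v - 3 * (u * n) := by omega
  obtain ⟨k, hk⟩ : 2 ∣ v + 3 * (u * n) := by omega
  obtain ⟨m, hm⟩ : 4 ∣ n ^ 2 - u ^ 2 := by omega
  refine ⟨g, k, m, hg.symm, hk.symm, hm.symm, 10 * n ^ 2 + u ^ 2, ?_⟩
  apply mul_left_cancel₀ (four_ne_zero (α := ℤ))
  linear_combination h - hg * (v + 3 * (u * n)) - 2 * g * hk + hm * (10 * n ^ 2 + u ^ 2)

lemma natAbs_lt_mul_self {u v n m : ℤ} (hn : 0 < n) (h : v ^ 2 = -u ^ 4 + 10 * n ^ 4)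
    (hm : 4 * m = n ^ 2 - u ^ 2) : m.natAbs < n.natAbs * n.natAbs := by
  have hu : u ^ 2 < 5 * n ^ 2 := by
    have : 0 < n ^ 4 := by positivity
    nlinarith [sq_nonneg v, sq_nonneg u, sq_nonneg n]
  zify
  rw [abs_of_pos hn, abs_lt]
  constructor <;> nlinarith [sq_nonneg u]

lemma sq_ne_quartic {d e : ℤ} {r z : ℚ} (hde : d * e = -10)
    (hd : d = 2 ∨ d = -2 ∨ d = 5 ∨ d = -5) : z ^ 2 ≠ d * r ^ 4 + (16 * e : ℤ) := by
  intro h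
  obtain ⟨N, -, hN⟩ := exists_int_of_sq_eq_quartic h
  have hcop : IsCoprime r.num r.den := Int.isCoprime_iff_gcd_eq_one.2 r.reduced
  have hpar : ¬ (r.num % 2 = 0 ∧ (r.den : ℤ) % 2 = 0) := fun ⟨hr, hr'⟩ ↦ Int.prime_two.not_isUnit
    (hcop.isUnit_of_dvd' (Int.dvd_of_emod_eq_zero hr) (Int.dvd_of_emod_eq_zero hr'))
  generalize r.num = M at hN hpar
  generalize (r.den : ℤ) = n at hN hpar
  have hn4 := pow_four_mod_sixteen n
  rcases Int.emod_two_eq_zero_or_one M with hM | hM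
  · obtain ⟨M, rfl⟩ := Int.dvd_of_emod_eq_zero hM
    obtain ⟨N, rfl⟩ : 4 ∣ N := by
      rw [← Int.pow_dvd_pow_iff two_ne_zero]
      exact ⟨d * M ^ 4 + e * n ^ 4, by rw [hN]; ring⟩
    have hN' : N ^ 2 = d * M ^ 4 + e * n ^ 4 := by linarith
    have := sq_mod_sixteen N
    have := pow_four_mod_sixteen M
    obtain ⟨rfl, rfl⟩ | ⟨rfl, rfl⟩ | ⟨rfl, rfl⟩ | ⟨rfl, rfl⟩ :
        d = 2 ∧ e = -5 ∨ d = -2 ∧ e = 5 ∨ d = 5 ∧ e = -2 ∨ d = -5 ∧ e = 2 := by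
      rcases hd with rfl | rfl | rfl | rfl <;> omega
    all_goals omega
  · have := sq_mod_sixteen N
    have := pow_four_mod_sixteen M
    rw [mul_assoc] at hN
    rcases hd with rfl | rfl | rfl | rfl <;> omega

end Descent

section MordellWeil

variable {P R : Pt} {r w x x' y y' : ℚ}

lemma HasCoords.eq_or_eq_neg (h : HasCoords P x y) (h' : HasCoords R x y') : P = R ∨ P = -R := by
  rcases sq_eq_sq_iff_eq_or_eq_neg.1 (h.sq_eq.trans h'.sq_eq.symm) with rfl | rfl
  · exact .inl (h.inj h')
  · exact .inr (h.inj h'.neg_curve)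

lemma HasCoords.exists_double (h : HasCoords P x y) (hy : y ≠ 0) :
    ∃ y', HasCoords (P + P) (((x ^ 2 + 160) / (2 * y)) ^ 2) y' := by
  have hx : ((3 * x ^ 2 - 160) / (2 * y)) ^ 2 - 2 * x = ((x ^ 2 + 160) / (2 * y)) ^ 2 := by
    field_simp
    linear_combination -8 * x * h.sq_eq
  exact ⟨_, hx ▸ h.double_curve hy (div_mul_cancel₀ _ (by simpa using hy))⟩

/-- The point `(-4, 24)`, of infinite order. -/
def Q : Pt := .some (-4) 24 (nonsingular (by norm_num))

/-- The point `(0, 0)`, of order two. -/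
def T : Pt := .some 0 0 (nonsingular (by norm_num))

lemma hasCoords_Q : HasCoords Q (-4) 24 := ⟨_, rfl⟩

lemma hasCoords_T : HasCoords T 0 0 := ⟨_, rfl⟩

lemma HasCoords.add_T (h : HasCoords P x y) (hx : x ≠ 0) :
    HasCoords (P + T) (-160 / x) (160 * y / x ^ 2) := by
  have := h.add_curve (ℓ := y / x) hasCoords_T hx (by field_simp; ring)
  have hx' : (y / x) ^ 2 - x - 0 = -160 / x := by
    field_simp
    linear_combination h.sq_eq
  convert this using 1
  · exact hx'.symm
  · field_simp
    linear_combination y * h.sq_eq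

lemma eq_or_eq_neg_add_self (h : HasCoords P (r ^ 2) y) (hR : HasCoords R x' y') (hy' : y' ≠ 0)
    (hr : r ^ 2 * (2 * y') ^ 2 = (x' ^ 2 + 160) ^ 2) : P = R + R ∨ P = -(R + R) := by
  obtain ⟨z, hz⟩ := hR.exists_double hy'
  refine h.eq_or_eq_neg (R := R + R) (y' := z) ?_
  convert hz using 1
  rw [div_pow, eq_div_iff (by positivity), hr]

lemma HasCoords.exists_descent (h : HasCoords P (r ^ 2) y) (hr : r ≠ 0) :
    ∃ p a b : ℕ, r.den = p * (a * b) ∧ a.Coprime b ∧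
      r ^ 2 * (p * (a * b)) ^ 2 = (a ^ 4 + 10 * b ^ 4) ^ 2 ∧
      (p ^ 2 + 10 * b ^ 4 = a ^ 4 ∧ 2 ∣ b ∨ p ^ 2 + a ^ 4 = 10 * b ^ 4) := by
  obtain ⟨v, -, hv⟩ := exists_int_of_sq_eq_quartic (z := y / r) (r := r) (α := 1) (β := -160) (by
    field_simp
    push_cast
    linear_combination h.sq_eq)
  have hnat : r.num.natAbs ^ 4 = v.natAbs ^ 2 + 160 * r.den ^ 4 := by
    zify
    rw [sq_abs, Even.pow_abs (by decide)]
    linarith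
  obtain ⟨p, a, b, hs, hab, hu, hpab⟩ := exists_descent_of_pow_four_eq r.den_ne_zero r.reduced hnat
  refine ⟨p, a, b, hs, hab, ?_, hpab⟩
  have hs' : (r.den : ℚ) = p * (a * b) := by exact_mod_cast hs
  have hu' : r.num ^ 2 = (a ^ 4 + 10 * b ^ 4 : ℤ) ^ 2 := by
    rw [← Int.natAbs_sq, hu]
    push_cast
    rfl
  rw [← hs', ← mul_pow, Rat.mul_den_eq_num]
  exact_mod_cast hu'

lemma den_div_of_coprime {a b : ℕ} (hb : b ≠ 0) (hab : a.Coprime b) : (a / b : ℚ).den = b := by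
  simpa using Rat.den_div_eq_of_coprime (a := a) (b := b) (by positivity) hab

lemma exists_half (h : HasCoords P (r ^ 2) y) (hr : r ≠ 0) :
    ∃ (R : Pt) (r' y' : ℚ), r'.den < r.den ∧
      (HasCoords R (r' ^ 2) y' ∨ HasCoords R (-4 * r' ^ 2) y') ∧ (P = R + R ∨ P = -(R + R)) := by
  obtain ⟨p, a, b, hs, hab, hr2, hpab⟩ := h.exists_descent hr
  have hden := r.den_ne_zero
  rw [hs] at hden ⊢
  obtain ⟨hp, ha, hb⟩ : p ≠ 0 ∧ a ≠ 0 ∧ b ≠ 0 := by simpa using hden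
  have hpa : 0 < p * a := by positivity
  rcases hpab with ⟨hpab, c, rfl⟩ | hpab
  · have hc : c ≠ 0 := right_ne_zero_of_mul hb
    have hpabq : (p ^ 2 + 10 * (2 * c) ^ 4 : ℚ) = a ^ 4 := by exact_mod_cast hpab
    obtain ⟨R, hR⟩ := exists_hasCoords (x := (a / c : ℚ) ^ 2) (y := a * p / c ^ 3) (by
      field_simp
      linear_combination hpabq)
    refine ⟨R, a / c, _, ?_, .inl hR, eq_or_eq_neg_add_self h hR (by positivity) ?_⟩
    · rw [den_div_of_coprime hc hab.coprime_mul_left_right]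
      nlinarith [Nat.pos_of_ne_zero hc]
    · push_cast at hr2
      field_simp
      linear_combination hr2
  · have hpabq : (p ^ 2 + a ^ 4 : ℚ) = 10 * b ^ 4 := by exact_mod_cast hpab
    obtain ⟨R, hR⟩ := exists_hasCoords (x := -4 * (a / b : ℚ) ^ 2) (y := 8 * a * p / b ^ 3) (by
      field_simp
      linear_combination 64 * hpabq)
    refine ⟨R, a / b, _, ?_, .inr hR, eq_or_eq_neg_add_self h hR (by positivity) ?_⟩
    · have : p * a ≠ 1 := by
        rintro h1
        obtain ⟨rfl, rfl⟩ := mul_eq_one.1 h1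
        omega
      rw [den_div_of_coprime hb hab, ← mul_assoc]
      exact lt_mul_left (Nat.pos_of_ne_zero hb) (by omega)
    · field_simp
      linear_combination 256 * hr2

lemma exists_den_lt {t : ℚ} (ht : t ^ 2 = 10 - w ^ 4) (hw : w ^ 2 ≠ 1) :
    (2 * (t - 3 * w) / (1 - w ^ 2)).den < w.den ∨
      (2 * (t + 3 * w) / (1 - w ^ 2)).den < w.den := by
  obtain ⟨v, htv, hv⟩ := exists_int_of_sq_eq_quartic (z := t) (r := w) (α := -1) (β := 10) (by
    push_cast
    linear_combination ht)
  have hcop : IsCoprime w.num w.den := Int.isCoprime_iff_gcd_eq_one.2 w.reduced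
  obtain ⟨g, k, m, hg, hk, hm, hdvd⟩ := exists_half_factors (v := v) hcop (by linarith)
  have hn : (w.den : ℚ) ≠ 0 := mod_cast w.den_ne_zero
  have hwn := w.mul_den_eq_num
  have hw1 : 1 - w ^ 2 ≠ 0 := fun h ↦ hw (by linarith)
  have hmq : (4 * m : ℚ) = w.den ^ 2 * (1 - w ^ 2) := by
    have : (4 * m : ℚ) = w.den ^ 2 - w.num ^ 2 := mod_cast hm
    rw [this, ← hwn]
    ring
  have hm0 : (m : ℚ) ≠ 0 := by
    have : (4 * m : ℚ) ≠ 0 := hmq ▸ mul_ne_zero (pow_ne_zero 2 hn) hw1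
    exact right_ne_zero_of_mul this
  have hquot {δ : ℚ} {j : ℤ} (hj : 2 * j = w.den ^ 2 * δ) : 2 * δ / (1 - w ^ 2) = j / m := by
    rw [div_eq_div_iff hw1 hm0]
    apply mul_left_cancel₀ (pow_ne_zero 2 hn)
    linear_combination j * hmq - 2 * m * hj
  have hgq : (2 * g : ℚ) = v - 3 * (w.num * w.den) := mod_cast hg
  have hkq : (2 * k : ℚ) = v + 3 * (w.num * w.den) := mod_cast hk
  rw [← htv, ← hwn] at hgq hkq
  rw [hquot (δ := t - 3 * w) (j := g) (by linear_combination hgq),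
    hquot (δ := t + 3 * w) (j := k) (by linear_combination hkq)]
  have hle := Nat.le_of_dvd (Int.natAbs_pos.2 (mod_cast hm0))
    (den_mul_den_dvd (g := g) (h := k) (mod_cast hm0) hdvd)
  have hlt := natAbs_lt_mul_self (v := v) (mod_cast w.den_pos) (by linarith) hm
  by_contra! hcon
  exact (Nat.mul_le_mul hcon.1 hcon.2).not_gt (hle.trans_lt hlt)

lemma exists_add_Q_or_sub_Q (h : HasCoords P (-4 * w ^ 2) y) (hw0 : w ≠ 0) (hw1 : w ^ 2 ≠ 1) :
    ∃ r y' : ℚ, r.den < w.den ∧ (HasCoords (P + Q) (r ^ 2) y' ∨ HasCoords (P - Q) (r ^ 2) y') := by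
  obtain ⟨t, rfl⟩ : ∃ t, y = 8 * w * t := ⟨y / (8 * w), by field_simp⟩
  have ht : t ^ 2 = 10 - w ^ 4 := by
    apply mul_left_cancel₀ (show 64 * w ^ 2 ≠ 0 by positivity)
    linear_combination h.sq_eq
  have hne : 1 - w ^ 2 ≠ 0 := fun h0 ↦ hw1 (by linarith)
  have hx : -4 * w ^ 2 ≠ -4 := fun h0 ↦ hw1 (by linarith)
  have hadd := h.add_curve hasCoords_Q hx (ℓ := (2 * w * t - 6) / (1 - w ^ 2))
    (by field_simp; ring)
  have hsub := h.add_curve hasCoords_Q.neg_curve hx (ℓ := (2 * w * t + 6) / (1 - w ^ 2))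
    (by field_simp; ring)
  have hxadd : ((2 * w * t - 6) / (1 - w ^ 2)) ^ 2 - -4 * w ^ 2 - -4 =
      (2 * (t - 3 * w) / (1 - w ^ 2)) ^ 2 := by
    field_simp
    linear_combination (4 * w ^ 2 - 4) * ht
  have hxsub : ((2 * w * t + 6) / (1 - w ^ 2)) ^ 2 - -4 * w ^ 2 - -4 =
      (2 * (t + 3 * w) / (1 - w ^ 2)) ^ 2 := by
    field_simp
    linear_combination (4 * w ^ 2 - 4) * ht
  rw [hxadd] at hadd
  rw [hxsub, ← sub_eq_add_neg] at hsub
  rcases exists_den_lt ht hw1 with hlt | hlt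
  · exact ⟨_, _, hlt, .inl hadd⟩
  · exact ⟨_, _, hlt, .inr hsub⟩

section Generators

variable {H : AddSubgroup Pt}

lemma mem_of_hasCoords_zero (hT : T ∈ H) (h : HasCoords P 0 y) : P ∈ H := by
  rcases h.eq_or_eq_neg hasCoords_T with rfl | rfl
  exacts [hT, neg_mem hT]

/-- Infinite descent on the denominator of `r`. -/
lemma mem_of_hasCoords_sq (hQ : Q ∈ H) (hT : T ∈ H)
    (h : HasCoords P (r ^ 2) y ∨ HasCoords P (-4 * r ^ 2) y) : P ∈ H := by
  induction hn : r.den using Nat.strong_induction_on generalizing P r y with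
  | _ n ih =>
  obtain rfl | hr := eq_or_ne r 0
  · exact mem_of_hasCoords_zero (y := y) hT (by simpa using h)
  rcases h with h | h
  · obtain ⟨R, r', y', hlt, hR, hP⟩ := exists_half h hr
    have hR := ih _ (hn ▸ hlt) hR rfl
    rcases hP with rfl | rfl
    exacts [add_mem hR hR, neg_mem (add_mem hR hR)]
  · by_cases hr1 : r ^ 2 = 1
    · rw [hr1, mul_one] at h
      rcases h.eq_or_eq_neg hasCoords_Q with rfl | rfl
      exacts [hQ, neg_mem hQ]
    · obtain ⟨r', y', hlt, hP | hP⟩ := exists_add_Q_or_sub_Q h hr hr1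
      · exact (add_mem_cancel_right hQ).1 (ih _ (hn ▸ hlt) (.inl hP) rfl)
      · exact (by simpa using add_mem (ih _ (hn ▸ hlt) (.inl hP) rfl) hQ)

lemma HasCoords.exists_squarefree_mul_sq (h : HasCoords P x y) (hx : x ≠ 0) :
    ∃ (d : ℤ) (r : ℚ), d ∣ 10 ∧ x = d * r ^ 2 := by
  have hdq : (x.den : ℚ) ≠ 0 := mod_cast x.den_ne_zero
  have hxn := x.mul_den_eq_num
  have key : (y * x.den ^ 2) ^ 2 =
      ((x.num * x.den * (x.num ^ 2 - 160 * x.den ^ 2) : ℤ) : ℚ) := by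
    push_cast
    rw [← hxn]
    linear_combination (x.den : ℚ) ^ 4 * h.sq_eq
  obtain ⟨k, hk⟩ := exists_intCast_eq_of_pow_eq two_ne_zero key
  rw [hk] at key
  have hn0 : x.num * x.den ≠ 0 := mul_ne_zero (Rat.num_ne_zero.2 hx) (mod_cast x.den_ne_zero)
  obtain ⟨d, e, f, hd, hde, hdf⟩ := CurveA4.exists_squarefree_mul_sq (k := k) hn0 (by
    exact_mod_cast key.symm)
  push_cast at hdf
  refine ⟨d, e / x.den, ?_, ?_⟩
  · have hdn : d ∣ x.num := by
      rw [← hd.dvd_pow_iff_dvd three_ne_zero]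
      exact ⟨f ^ 2 * x.num + 160 * x.den * e ^ 2, by
        linear_combination x.num * hdf + 160 * x.den * hde⟩
    have hcop : IsCoprime x.num (x.den : ℤ) := Int.isCoprime_iff_gcd_eq_one.2 x.reduced
    have hdd : IsCoprime d (x.den ^ 2 : ℤ) := (hcop.of_isCoprime_of_dvd_left hdn).pow_right
    have hd160 : d ∣ 160 := hdd.dvd_of_dvd_mul_right ((dvd_sub_right (dvd_pow hdn two_ne_zero)).1
      ⟨f ^ 2, hdf⟩)
    exact (hd.dvd_pow_iff_dvd (n := 5) (by norm_num)).1 (hd160.trans (by norm_num))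
  · have hdeq : (x.num * x.den : ℚ) = d * e ^ 2 := mod_cast hde
    field_simp
    linear_combination hdeq + x.den * hxn

lemma HasCoords.eq_sq_or (h : HasCoords P x y) (hx : x ≠ 0) :
    ∃ r : ℚ, x = r ^ 2 ∨ x = -r ^ 2 ∨ x = 10 * r ^ 2 ∨ x = -10 * r ^ 2 := by
  obtain ⟨d, r, ⟨e, hde⟩, rfl⟩ := h.exists_squarefree_mul_sq hx
  obtain ⟨hd0, hr⟩ : (d : ℚ) ≠ 0 ∧ r ≠ 0 := by simpa using hx
  have hdeq : (10 : ℚ) = d * e := mod_cast hde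
  have hne : ¬ (d = 2 ∨ d = -2 ∨ d = 5 ∨ d = -5) := fun hd ↦ by
    refine sq_ne_quartic (e := -e) (r := r) (z := y / (d * r)) (by linarith) hd ?_
    push_cast
    field_simp
    linear_combination h.sq_eq - 16 * d * r ^ 2 * hdeq
  have hd10 : d.natAbs ∈ ({1, 2, 5, 10} : Finset ℕ) :=
    Nat.mem_divisors.2 ⟨Int.natAbs_dvd_natAbs.2 ⟨e, hde⟩, by norm_num⟩
  simp only [Finset.mem_insert, Finset.mem_singleton] at hd10
  obtain rfl | rfl | rfl | rfl : d = 1 ∨ d = -1 ∨ d = 10 ∨ d = -10 := by omega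
  all_goals exact ⟨r, by simp⟩

lemma mem_of_Q_mem_of_T_mem (hQ : Q ∈ H) (hT : T ∈ H) (P : Pt) : P ∈ H := by
  rcases eq_zero_or_hasCoords P with rfl | ⟨x, y, h⟩
  · exact zero_mem _
  obtain rfl | hx := eq_or_ne x 0
  · exact mem_of_hasCoords_zero hT h
  have hPT := h.add_T hx
  rw [← add_mem_cancel_right hT]
  obtain ⟨r, rfl | rfl | rfl | rfl⟩ := h.eq_sq_or hx
  · exact add_mem (mem_of_hasCoords_sq hQ hT (.inl h)) hT
  · refine add_mem (mem_of_hasCoords_sq (r := r / 2) (y := y) hQ hT (.inr ?_)) hT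
    convert h using 1
    ring
  · refine mem_of_hasCoords_sq (r := 2 / r) (y := 160 * y / (10 * r ^ 2) ^ 2) hQ hT (.inr ?_)
    convert hPT using 1
    field_simp
    ring
  · refine mem_of_hasCoords_sq (r := 4 / r) (y := 160 * y / (-10 * r ^ 2) ^ 2) hQ hT (.inl ?_)
    convert hPT using 1
    field_simp
    ring

theorem exists_eq_zsmul_Q_or_add_T (P : Pt) : ∃ n : ℤ, P = n • Q ∨ P = n • Q + T := by
  have hP : P ∈ AddSubgroup.closure {Q, T} := mem_of_Q_mem_of_T_mem
    (AddSubgroup.subset_closure (by simp)) (AddSubgroup.subset_closure (by simp)) P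
  obtain ⟨n, k, rfl⟩ := AddSubgroup.mem_closure_pair.1 hP
  have hT : (2 : ℤ) • T = 0 := (two_zsmul T).trans hasCoords_T.add_self_of_y_eq_zero
  obtain ⟨j, rfl | rfl⟩ := Int.even_or_odd' k
  · exact ⟨n, .inl (by rw [mul_comm, mul_zsmul, hT, zsmul_zero, add_zero])⟩
  · exact ⟨n, .inr (by rw [add_zsmul, mul_comm, mul_zsmul, hT, zsmul_zero, zero_add, one_zsmul])⟩

end Generators

end MordellWeil

section CohnPrimes

variable {P : Pt} {L N M : ℤ}

/-- Integers `L`, `N`, `M` describing a point `P`, where `L / N` is half the slope of the line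
through `P` and `T`: then `(x / 2 - (L / N) ^ 2) ^ 2 = (L / N) ^ 4 + 40`, and `M / N ^ 2` is the
square root giving the first coordinate of `P`. -/
structure SlopeData (P : Pt) (L N M : ℤ) : Prop where
  den_ne_zero : N ≠ 0
  sq_eq : M ^ 2 = L ^ 4 + 40 * N ^ 4
  isCoprime : IsCoprime L N
  isCoprime_ten : IsCoprime L 10
  hasCoords : HasCoords P (2 * (L ^ 2 - M) / N ^ 2) (4 * L * (L ^ 2 - M) / N ^ 3)

lemma isCoprime_double_slope (hM : M ^ 2 = L ^ 4 + 40 * N ^ 4) (hN : IsCoprime L N)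
    (h10 : IsCoprime L 10) :
    IsCoprime (L ^ 4 - 40 * N ^ 4) 10 ∧ IsCoprime (L ^ 4 - 40 * N ^ 4) (-2 * L * N * M) := by
  have hL10 : IsCoprime (L ^ 4 - 40 * N ^ 4) 10 := by
    rw [show L ^ 4 - 40 * N ^ 4 = L ^ 4 + -4 * N ^ 4 * 10 by ring]
    exact h10.pow_left.add_mul_right_left _
  have hVN : IsCoprime (L ^ 4 - 40 * N ^ 4) N := by
    rw [show L ^ 4 - 40 * N ^ 4 = L ^ 4 + -40 * N ^ 3 * N by ring]
    exact hN.pow_left.add_mul_right_left _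
  have h2 : IsCoprime (L ^ 4 - 40 * N ^ 4) 2 := hL10.of_isCoprime_of_dvd_right (by norm_num)
  have h40 : IsCoprime (L ^ 4 - 40 * N ^ 4) (40 * N ^ 4) :=
    (hL10.pow_right (n := 3)).of_isCoprime_of_dvd_right (by norm_num) |>.mul_right hVN.pow_right
  have hVL : IsCoprime (L ^ 4 - 40 * N ^ 4) L := by
    rw [← IsCoprime.pow_right_iff (m := 4) (by norm_num)]
    have := h40.add_mul_left_right 1
    rwa [mul_one, add_sub_cancel] at this
  have hVM : IsCoprime (L ^ 4 - 40 * N ^ 4) M := by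
    rw [← IsCoprime.pow_right_iff (m := 2) (by norm_num), hM]
    rw [show L ^ 4 + 40 * N ^ 4 = 2 * (40 * N ^ 4) + (L ^ 4 - 40 * N ^ 4) * 1 by ring]
    exact (h2.mul_right h40).add_mul_left_right 1
  exact ⟨hL10, ((h2.neg_right.mul_right hVL).mul_right hVN).mul_right hVM⟩

lemma SlopeData.double (h : SlopeData P L N M) :
    SlopeData (P + P) (L ^ 4 - 40 * N ^ 4) (-2 * L * N * M)
      (-(L ^ 8 + 240 * L ^ 4 * N ^ 4 + 1600 * N ^ 8)) := by
  obtain ⟨hN0, hM, hLN, hL10, hP⟩ := h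
  have hL0 : L ≠ 0 := by
    rintro rfl
    exact absurd (isCoprime_zero_left.1 hL10) (by decide)
  have hN4 : 0 < N ^ 4 := by positivity
  have hM0 : M ≠ 0 := by
    rintro rfl
    linarith [show 0 < L ^ 4 by positivity]
  have hLM : L ^ 2 - M ≠ 0 := fun h0 ↦ by
    rw [← sub_eq_zero.1 h0] at hM
    linarith
  obtain ⟨h10', hLN'⟩ := isCoprime_double_slope hM hLN hL10
  refine ⟨by simp [hL0, hN0, hM0], ?_, hLN', h10', ?_⟩
  · linear_combination -640 * L ^ 4 * N ^ 4 * (M ^ 2 + L ^ 4 + 40 * N ^ 4) * hM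
  · have hN0q : (N : ℚ) ≠ 0 := mod_cast hN0
    have hL0q : (L : ℚ) ≠ 0 := mod_cast hL0
    have hM0q : (M : ℚ) ≠ 0 := mod_cast hM0
    have hLMq : (L ^ 2 - M : ℚ) ≠ 0 := mod_cast hLM
    have hMq : (M : ℚ) ^ 2 = L ^ 4 + 40 * N ^ 4 := mod_cast hM
    have hy : (4 * L * (L ^ 2 - M) / N ^ 3 : ℚ) ≠ 0 := by positivity
    convert hP.double_curve hy (ℓ := (2 * L ^ 2 - M) / (L * N)) (by field_simp; grind) using 1
    · push_cast
      field_simp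
      grind
    · push_cast
      field_simp
      grind

lemma SlopeData.odd (h : SlopeData P L N M) : Odd L := by
  rw [← Int.not_even_iff_odd]
  intro h2
  exact absurd (h.isCoprime_ten.isUnit_of_dvd' h2.two_dvd (by norm_num)) (by decide)

lemma slopeData_Q : SlopeData Q (-3) 1 11 where
  den_ne_zero := by norm_num
  sq_eq := by norm_num
  isCoprime := by norm_num
  isCoprime_ten := by norm_num
  hasCoords := by convert hasCoords_Q using 1 <;> norm_num

lemma hasCoords_two_nsmul_Q : HasCoords (2 • Q) (121 / 9) (451 / 27) := by
  rw [two_nsmul]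
  convert hasCoords_Q.double_curve (ℓ := -7 / 3) (by norm_num) (by norm_num) using 1 <;> norm_num

lemma slopeData_three_nsmul_Q : SlopeData (3 • Q) 53037 37523 9338540651 where
  den_ne_zero := by norm_num
  sq_eq := by norm_num
  isCoprime := by rw [Int.isCoprime_iff_gcd_eq_one]; decide +kernel
  isCoprime_ten := by norm_num
  hasCoords := by
    rw [succ_nsmul]
    convert hasCoords_two_nsmul_Q.add_curve (ℓ := -197 / 471) hasCoords_Q (by norm_num)
      (by norm_num) using 1 <;> norm_num

instance : Fact (Nat.Prime 149) := ⟨by norm_num⟩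

/-- The integers `L`, `N`, `M` describe `P` and `(L / N) ^ 2` reduces to `θ` modulo 149. -/
def SlopeSqMod (P : Pt) (θ : ZMod 149) : Prop :=
  ∃ L N M : ℤ, SlopeData P L N M ∧ (N : ZMod 149) ≠ 0 ∧ (L : ZMod 149) ^ 2 = θ * N ^ 2

/-- The effect of doubling a point on the square of its half slope. A vanishing denominator gives
the junk value `0`, which the map fixes. -/
def doubleSlopeSq (θ : ZMod 149) : ZMod 149 := (θ ^ 2 - 40) ^ 2 / (4 * θ * (θ ^ 2 + 40))

lemma SlopeSqMod.double {θ : ZMod 149} (h : SlopeSqMod P θ) (hθ : doubleSlopeSq θ ≠ 0) :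
    SlopeSqMod (P + P) (doubleSlopeSq θ) := by
  obtain ⟨L, N, M, hP, hN, hL⟩ := h
  have hden : 4 * θ * (θ ^ 2 + 40) ≠ 0 := fun h0 ↦ hθ (by rw [doubleSlopeSq, h0, div_zero])
  have hM : (M : ZMod 149) ^ 2 = L ^ 4 + 40 * N ^ 4 := mod_cast congrArg Int.cast hP.sq_eq
  have hN' : ((-2 * L * N * M : ℤ) : ZMod 149) ^ 2 = 4 * θ * (θ ^ 2 + 40) * N ^ 8 := by
    push_cast
    grind
  refine ⟨_, _, _, hP.double, fun h0 ↦ ?_, ?_⟩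
  · rw [h0, zero_pow two_ne_zero] at hN'
    exact mul_ne_zero hden (pow_ne_zero 8 hN) hN'.symm
  · rw [hN', ← mul_assoc, doubleSlopeSq, div_mul_cancel₀ _ hden]
    push_cast
    grind

lemma SlopeSqMod.two_pow_nsmul {θ : ZMod 149} (h : SlopeSqMod P θ)
    (hθ : ∀ k, doubleSlopeSq^[k] θ ≠ 0) (k : ℕ) :
    SlopeSqMod (2 ^ k • P) (doubleSlopeSq^[k] θ) := by
  induction k with
  | zero => simpa using h
  | succ k ih =>
    have hk := hθ (k + 1)
    rw [Function.iterate_succ_apply'] at hk ⊢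
    rw [pow_succ, mul_two, add_nsmul]
    exact ih.double hk

lemma SlopeSqMod.exists_not_isSquare {θ : ZMod 149} (h : SlopeSqMod P θ)
    (hθ : ¬ IsSquare (θ ^ 2 - 40)) :
    ∃ L N M : ℤ, SlopeData P L N M ∧ ¬ IsSquare ((L ^ 4 - 40 * N ^ 4 : ℤ) : ZMod 149) := by
  obtain ⟨L, N, M, hP, hN, hL⟩ := h
  refine ⟨L, N, M, hP, fun ⟨r, hr⟩ ↦ hθ ⟨r / N ^ 2, ?_⟩⟩
  push_cast at hr
  field_simp
  grind

lemma slopeSqMod_Q : SlopeSqMod Q 9 := ⟨_, _, _, slopeData_Q, by decide +kernel, by decide +kernel⟩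

lemma slopeSqMod_three_nsmul_Q : SlopeSqMod (3 • Q) 125 :=
  ⟨_, _, _, slopeData_three_nsmul_Q, by decide +kernel, by decide +kernel⟩

lemma exists_slopeData_not_isSquare (k : ℕ) :
    ∃ (h : ℕ) (L N M : ℤ), (h = 1 ∨ h = 3) ∧ SlopeData ((2 ^ k * h) • Q) L N M ∧
      ¬ IsSquare ((L ^ 4 - 40 * N ^ 4 : ℤ) : ZMod 149) := by
  have hk : k % 8 < 8 := k.mod_lt (by norm_num)
  have hmod {θ : ZMod 149} (hθ : doubleSlopeSq^[8] θ = θ) (k : ℕ) :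
      doubleSlopeSq^[k % 8] θ = doubleSlopeSq^[k] θ :=
    Function.IsPeriodicPt.iterate_mod_apply (n := 8) hθ k
  have h9 : doubleSlopeSq^[8] 9 = 9 := by decide +kernel
  have h125 : doubleSlopeSq^[8] 125 = 125 := by decide +kernel
  have h9' (k : ℕ) : doubleSlopeSq^[k] 9 ≠ 0 := fun h0 ↦
    (by decide +kernel : ∀ r < 8, doubleSlopeSq^[r] 9 ≠ 0) _ (k.mod_lt (by norm_num))
      ((hmod h9 k).trans h0)
  have h125' (k : ℕ) : doubleSlopeSq^[k] 125 ≠ 0 := fun h0 ↦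
    (by decide +kernel : ∀ r < 8, doubleSlopeSq^[r] 125 ≠ 0) _ (k.mod_lt (by norm_num))
      ((hmod h125 k).trans h0)
  have key : ∀ r < 8, ¬ IsSquare ((doubleSlopeSq^[r] 9) ^ 2 - 40) ∨
      ¬ IsSquare ((doubleSlopeSq^[r] 125) ^ 2 - 40) := by decide +kernel
  rcases key _ hk with hns | hns
  · rw [hmod h9] at hns
    obtain ⟨L, N, M, hP, hLN⟩ := (slopeSqMod_Q.two_pow_nsmul h9' k).exists_not_isSquare hns
    exact ⟨1, L, N, M, .inl rfl, by rwa [mul_one], hLN⟩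
  · rw [hmod h125] at hns
    obtain ⟨L, N, M, hP, hLN⟩ :=
      (slopeSqMod_three_nsmul_Q.two_pow_nsmul h125' k).exists_not_isSquare hns
    exact ⟨3, L, N, M, .inr rfl, by rwa [mul_comm, mul_nsmul], hLN⟩

lemma jacobiSym_298_eq {n : ℕ} (hn : n % 8 = 1 ∨ n % 8 = 7) :
    jacobiSym 298 n = jacobiSym n 149 := by
  have hodd : Odd n := by rw [Nat.odd_iff]; omega
  have h2 : jacobiSym 2 n = 1 := by
    rw [jacobiSym.at_two hodd, ZMod.χ₈_nat_eq_if_mod_eight, if_neg (by omega), if_pos hn]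
  have h149 := jacobiSym.quadratic_reciprocity_one_mod_four (a := 149) (b := n) (by norm_num) hodd
  rw [show (298 : ℤ) = 2 * 149 by norm_num, jacobiSym.mul_left, h2, one_mul]
  exact h149

lemma pow_four_sub_emod_eight (hL : Odd L) : (L ^ 4 - 40 * N ^ 4) % 8 = 1 := by
  have h := Int.sq_mod_four_eq_one_of_odd hL
  obtain ⟨j, hj⟩ : ∃ j, L ^ 2 = 4 * j + 1 := ⟨L ^ 2 / 4, by omega⟩
  have : L ^ 4 - 40 * N ^ 4 = 8 * (2 * j ^ 2 + j - 5 * N ^ 4) + 1 := by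
    linear_combination (L ^ 2 + 4 * j + 1) * hj
  omega

lemma exists_prime_dvd_not_isSquare (hL : Odd L)
    (hns : ¬ IsSquare ((L ^ 4 - 40 * N ^ 4 : ℤ) : ZMod 149)) :
    ∃ p : ℕ, p.Prime ∧ (p : ℤ) ∣ L ^ 4 - 40 * N ^ 4 ∧ ¬ IsSquare (298 : ZMod p) := by
  have hV := pow_four_sub_emod_eight (N := N) hL
  generalize L ^ 4 - 40 * N ^ 4 = V at hns hV ⊢
  have hns' : ¬ IsSquare ((V.natAbs : ℤ) : ZMod 149) := by
    rcases Int.natAbs_eq V with h | h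
    · rwa [← h]
    · have h1 : IsSquare (-1 : ZMod 149) := ⟨44, by decide +kernel⟩
      rw [h] at hns
      exact fun hs ↦ hns (by simpa using h1.mul hs)
  have hJ : jacobiSym 298 V.natAbs = -1 := by
    rw [jacobiSym_298_eq (by omega)]
    exact ZMod.nonsquare_iff_jacobiSym_eq_neg_one.2 hns'
  obtain ⟨p, hp, hpV, hJp⟩ := jacobiSym.eq_neg_one_at_prime_divisor_of_eq_neg_one hJ
  have : Fact p.Prime := ⟨hp⟩
  exact ⟨p, hp, Int.natCast_dvd.2 hpV, mod_cast ZMod.nonsquare_iff_jacobiSym_eq_neg_one.1 hJp⟩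

end CohnPrimes

section Quadrics

lemma intCast_ne_zero_of_isCoprime {R : Type*} [Ring R] [Nontrivial R] {a b : ℤ}
    (h : IsCoprime a b) (ha : (a : R) = 0) : (b : R) ≠ 0 := by
  obtain ⟨u, v, huv⟩ := h
  intro hb
  have := congrArg (Int.cast : ℤ → R) huv
  simp [ha, hb] at this

/-- The sextic form `G(a, b)`, which has to be made a square. -/
def sexticForm {R : Type*} [CommRing R] (a b : R) : R :=
  (a ^ 2 + 4 * a * b - b ^ 2) ^ 3 + 108 * a ^ 3 * b ^ 3

lemma intCast_sexticForm {R : Type*} [CommRing R] (a b : ℤ) :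
    ((sexticForm a b : ℤ) : R) = sexticForm (a : R) (b : R) := by
  simp [sexticForm]

lemma isSquare_sexticForm_one {k : Type*} [Field k] {a b w : ℤ} {r : k} (hab : IsCoprime a b)
    (hG : sexticForm a b = w ^ 2) (hr : (b : k) = r * a) : IsSquare (sexticForm 1 r) := by
  have ha : (a : k) ≠ 0 := fun h0 ↦
    intCast_ne_zero_of_isCoprime hab h0 (by rw [hr, h0, mul_zero])
  have hG' : sexticForm (a : k) b = w ^ 2 := by
    rw [← intCast_sexticForm, hG, Int.cast_pow]
  refine ⟨w / a ^ 3, ?_⟩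
  rw [hr] at hG'
  field_simp
  rw [← hG', sexticForm, sexticForm]
  ring

/-- A primitive integral point, with `b ≠ 0`, on the intersection of two quadrics
`c ^ 2 = a ^ 2 + b ^ 2`, `e ^ 2 = a ^ 2 + 6ab - b ^ 2`.  This is a curve of genus one. -/
structure QuadricPoint (a b c e : ℤ) : Prop where
  ne_zero : b ≠ 0
  isCoprime : IsCoprime a b
  sq_c : a ^ 2 + b ^ 2 = c ^ 2
  sq_e : a ^ 2 + 6 * a * b - b ^ 2 = e ^ 2

/-- The first coordinate of the isomorphism from the intersection of quadrics to `E`. -/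
def quadricX (a b c e : ℤ) : ℚ := 4 * (a + c) * (a + 3 * b - e) / b ^ 2

/-- The second coordinate of the isomorphism from the intersection of quadrics to `E`. -/
def quadricY (a b c e : ℤ) : ℚ := 2 * quadricX a b c e * (e - c) / b

namespace QuadricPoint

variable {a b c e : ℤ} {P P' : Pt}

lemma neg_c (h : QuadricPoint a b c e) : QuadricPoint a b (-c) e :=
  ⟨h.ne_zero, h.isCoprime, h.sq_c.trans (neg_sq c).symm, h.sq_e⟩

lemma neg_e (h : QuadricPoint a b c e) : QuadricPoint a b c (-e) :=
  ⟨h.ne_zero, h.isCoprime, h.sq_c, h.sq_e.trans (neg_sq e).symm⟩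

lemma cast_eqs {R : Type*} [CommRing R] (h : QuadricPoint a b c e) :
    (a : R) ^ 2 + b ^ 2 = c ^ 2 ∧ (a : R) ^ 2 + 6 * a * b - b ^ 2 = e ^ 2 :=
  ⟨mod_cast congrArg (Int.cast : ℤ → R) h.sq_c, mod_cast congrArg (Int.cast : ℤ → R) h.sq_e⟩

lemma cast_ne_zero (h : QuadricPoint a b c e) : (b : ℚ) ≠ 0 := mod_cast h.ne_zero

lemma c_ne_zero (h : QuadricPoint a b c e) : (c : ℚ) ≠ 0 := fun h0 ↦ by
  have hb := h.cast_ne_zero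
  have : (0 : ℚ) < a ^ 2 + b ^ 2 := by positivity
  rw [(h.cast_eqs (R := ℚ)).1, h0] at this
  norm_num at this

lemma a_add_c_ne_zero (h : QuadricPoint a b c e) : (a + c : ℚ) ≠ 0 := fun h0 ↦
  pow_ne_zero 2 h.cast_ne_zero (by linear_combination (h.cast_eqs (R := ℚ)).1 + (c - a) * h0)

lemma a_add_sub_e_ne_zero (h : QuadricPoint a b c e) : (a + 3 * b - e : ℚ) ≠ 0 := fun h0 ↦
  pow_ne_zero 2 h.cast_ne_zero (by
    linear_combination -(h.cast_eqs (R := ℚ)).2 / 10 + (a + 3 * b + e) / 10 * h0)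

lemma quadricX_ne_zero (h : QuadricPoint a b c e) : quadricX a b c e ≠ 0 := by
  have := h.cast_ne_zero
  have := h.a_add_c_ne_zero
  have := h.a_add_sub_e_ne_zero
  rw [quadricX]
  positivity

lemma exists_hasCoords (h : QuadricPoint a b c e) :
    ∃ P : Pt, HasCoords P (quadricX a b c e) (quadricY a b c e) := by
  apply CurveA4.exists_hasCoords
  have hb := h.cast_ne_zero
  obtain ⟨hc, he⟩ := h.cast_eqs (R := ℚ)
  unfold quadricY quadricX
  field_simp
  grind

lemma linear_relations (h : QuadricPoint a b c e) :
    quadricX a b c e * (c - a) = 4 * (a + 3 * b - e) ∧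
      quadricX a b c e * (a + 3 * b + e) = 40 * (a + c) ∧
        2 * quadricX a b c e * (e - c) = quadricY a b c e * b := by
  have hb := h.cast_ne_zero
  obtain ⟨hc, he⟩ := h.cast_eqs (R := ℚ)
  unfold quadricY quadricX
  refine ⟨?_, ?_, ?_⟩
  · field_simp
    linear_combination -(a + 3 * b - e : ℚ) * hc
  · field_simp
    linear_combination 4 * (a + c : ℚ) * he
  · field_simp

lemma linear_relations_of_reducesTo {k : Type*} [Field k] {v : Fin 3 → k}
    (h : QuadricPoint a b c e) (hP : HasCoords P (quadricX a b c e) (quadricY a b c e))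
    (hv : ReducesTo P v) :
    v 0 * (c - a) = 4 * (a + 3 * b - e) * v 2 ∧ v 0 * (a + 3 * b + e) = 40 * (a + c) * v 2 ∧
      2 * v 0 * (e - c) = v 1 * b := by
  obtain ⟨h₁, h₂, h₃⟩ := h.linear_relations
  have r₁ := hv.linear_relation (α := c - a) (β := 0) (γ := -(4 * (a + 3 * b - e))) hP (by
    simp only [algebraMap_int_eq, eq_intCast]
    push_cast
    linear_combination h₁)
  have r₂ := hv.linear_relation (α := a + 3 * b + e) (β := 0) (γ := -(40 * (a + c))) hP (by
    simp only [algebraMap_int_eq, eq_intCast]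
    push_cast
    linear_combination h₂)
  have r₃ := hv.linear_relation (α := 2 * (e - c)) (β := -b) (γ := 0) hP (by
    simp only [algebraMap_int_eq, eq_intCast]
    push_cast
    linear_combination h₃)
  simp only [algebraMap_int_eq, eq_intCast] at r₁ r₂ r₃
  push_cast at r₁ r₂ r₃
  exact ⟨by linear_combination r₁, by linear_combination r₂, by linear_combination r₃⟩

lemma add_eq_Q (h : QuadricPoint a b c e)
    (hP : HasCoords P (quadricX a b c e) (quadricY a b c e))
    (hP' : HasCoords P' (quadricX a b (-c) e) (quadricY a b (-c) e)) : P + P' = Q := by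
  have hb := h.cast_ne_zero
  obtain ⟨hc, he⟩ := h.cast_eqs (R := ℚ)
  have hu := h.a_add_sub_e_ne_zero
  have hne : quadricX a b c e ≠ quadricX a b (-c) e := by
    unfold quadricX
    intro h0
    field_simp at h0
    push_cast at h0
    exact h.c_ne_zero (by linarith)
  have hadd := hP.add_curve hP' hne (ℓ := 2 * (e - a) / b) (by
    unfold quadricY quadricX
    push_cast
    field_simp
    ring)
  refine HasCoords.inj ?_ hasCoords_Q
  convert hadd using 1
  · unfold quadricX
    push_cast
    field_simp
    grind
  · unfold quadricY quadricX
    push_cast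
    field_simp
    grind

lemma add_T (h : QuadricPoint a b c e)
    (hP : HasCoords P (quadricX a b c e) (quadricY a b c e)) :
    HasCoords (P + T) (quadricX a b (-c) (-e)) (quadricY a b (-c) (-e)) := by
  have hb := h.cast_ne_zero
  obtain ⟨hc, he⟩ := h.cast_eqs (R := ℚ)
  have h1 := h.a_add_c_ne_zero
  have h2 := h.a_add_sub_e_ne_zero
  convert hP.add_T h.quadricX_ne_zero using 1
  · unfold quadricX
    push_cast
    field_simp
    grind
  · unfold quadricY quadricX
    push_cast
    field_simp
    grind

end QuadricPoint

section Kernel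

variable {k : Type*} [Field k] {P : Pt} {L N M : ℤ}

lemma ReducesTo.add_self_kernel {x z : k} (h : ReducesTo P ![x, 0, z]) (h10 : (10 : k) ≠ 0)
    (hz : z ≠ 0) (hx : x ^ 2 = 160 * z ^ 2) : ReducesTo (P + P) ![(0 : k), 1, 0] := by
  have heq : (E.baseChange k).toProjective.Equation ![x, 0, z] := by
    rw [WeierstrassCurve.Projective.equation_iff]
    simp only [E, Matrix.cons_val, WeierstrassCurve.baseChange, WeierstrassCurve.map,
      algebraMap_int_eq, eq_intCast]
    push_cast
    linear_combination -x * hx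
  have hne : (E.baseChange k).toProjective.dblU ![x, 0, z] ≠ 0 := by
    have h2 : (2 : k) ≠ 0 := fun h2 ↦ h10 (by linear_combination 5 * h2)
    have h320 : (2 : k) ^ 5 * 10 * z ^ 2 ≠ 0 := by positivity
    rw [WeierstrassCurve.Projective.dblU_eq]
    refine div_ne_zero (pow_ne_zero 3 fun h0 ↦ h320 ?_) (pow_ne_zero 2 hz)
    simp only [E, Matrix.cons_val, WeierstrassCurve.baseChange, WeierstrassCurve.map,
      algebraMap_int_eq, eq_intCast] at h0
    push_cast at h0
    linear_combination -h0 - 3 * hx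
  have hdbl := WeierstrassCurve.Projective.dblXYZ_of_Y_eq heq hz hz rfl rfl (by
    simp [E, WeierstrassCurve.Projective.negY])
  refine h.double.congr ?_
  rw [hdbl]
  exact WeierstrassCurve.Projective.smul_equiv _ hne.isUnit

lemma SlopeData.exists_reducesTo (h : SlopeData P L N M) (hL : (L : k) = 0) :
    ∃ x z : k, z ≠ 0 ∧ x ^ 2 = 160 * z ^ 2 ∧ ReducesTo P ![x, 0, z] := by
  have hN : (N : k) ≠ 0 := intCast_ne_zero_of_isCoprime h.isCoprime hL
  have hM : (M : k) ^ 2 = L ^ 4 + 40 * N ^ 4 := mod_cast congrArg (Int.cast : ℤ → k) h.sq_eq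
  have hNq : (N : ℚ) ≠ 0 := mod_cast h.den_ne_zero
  refine ⟨-2 * M * N, N ^ 3, pow_ne_zero 3 hN, ?_, ?_⟩
  · rw [hL] at hM
    linear_combination 4 * (N : k) ^ 2 * hM
  · convert ReducesTo.of_hasCoords (k := k)
      ![2 * (L ^ 2 - M) * N, 4 * L * (L ^ 2 - M), N ^ 3] h.hasCoords ?_ ?_ ?_ using 1
    · ext i
      fin_cases i <;> simp [hL]
    · simpa using hNq
    · simp only [Matrix.cons_val, algebraMap_int_eq, eq_intCast]
      push_cast
      field_simp
    · simp only [Matrix.cons_val, algebraMap_int_eq, eq_intCast]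
      push_cast
      field_simp

lemma SlopeData.add_self_kernel (h : SlopeData P L N M) (hL : (L : k) = 0) :
    ReducesTo (P + P) ![(0 : k), 1, 0] := by
  obtain ⟨x, z, hz, hx, hP⟩ := h.exists_reducesTo hL
  have h10 : (10 : k) ≠ 0 := mod_cast intCast_ne_zero_of_isCoprime h.isCoprime_ten hL
  exact hP.add_self_kernel h10 hz hx

end Kernel

end Quadrics

section Sieve

variable {a b c e w : ℤ} {P : Pt}

instance : Fact (Nat.Prime 71) := ⟨by norm_num⟩

lemma reducesTo_two_nsmul_Q : ReducesTo (2 • Q) (![363, 451, 27] : Fin 3 → ZMod 71) := by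
  convert ReducesTo.of_hasCoords (R := ℤ) (k := ZMod 71) ![363, 451, 27] hasCoords_two_nsmul_Q
    (by simp) ?_ (by simp) using 1
  · ext i
    fin_cases i <;> simp
  · simp only [Matrix.cons_val, algebraMap_int_eq, eq_intCast]
    norm_num

lemma reducesTo_six_nsmul_Q : ReducesTo (6 • Q) (![0, 1, 0] : Fin 3 → ZMod 71) := by
  rw [show 6 = 3 + 3 from rfl, add_nsmul]
  exact slopeData_three_nsmul_Q.add_self_kernel (by decide +kernel)

lemma ne_zero_of_sq_eq {k : Type*} [Field k] {x z : k} (h30 : (30 : k) ≠ 0) (hz : z ≠ 0)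
    (hx : x ^ 2 = 160 * z ^ 2) : x ≠ 0 := fun h0 ↦ by
  have : (30 : k) ^ 5 * z ^ 2 ≠ 0 := by positivity
  exact this (by linear_combination 151875 * (x * h0 - hx))

namespace QuadricPoint

lemma sieve_eq_fifty_mul (h : QuadricPoint a b c e)
    (hP : HasCoords P (quadricX a b c e) (quadricY a b c e))
    (hv : ReducesTo P (![363, 451, 27] : Fin 3 → ZMod 71)) : (b : ZMod 71) = 50 * a := by
  obtain ⟨h₁, h₂, h₃⟩ := h.linear_relations_of_reducesTo hP hv
  simp only [Matrix.cons_val] at h₁ h₂ h₃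
  grind

lemma sieve_eq_three_mul (h : QuadricPoint a b c e)
    (hP : HasCoords P (quadricX a b c e) (quadricY a b c e))
    (hv : ReducesTo P (![363, -451, 27] : Fin 3 → ZMod 71)) : (b : ZMod 71) = 3 * a := by
  obtain ⟨h₁, h₂, h₃⟩ := h.linear_relations_of_reducesTo hP hv
  simp only [Matrix.cons_val] at h₁ h₂ h₃
  grind

/-- `Q` has order six modulo 71, and at `±2Q` the form `G` takes only nonsquare values. -/
lemma three_dvd_of_sexticForm_eq_sq (h : QuadricPoint a b c e) (hG : sexticForm a b = w ^ 2) {n : ℤ}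
    (hP : HasCoords (n • 2 • Q) (quadricX a b c e) (quadricY a b c e)) : 3 ∣ n := by
  have h27 : (![363, 451, 27] : Fin 3 → ZMod 71) 2 ≠ 0 := by decide +kernel
  have h27' : (![363, -451, 27] : Fin 3 → ZMod 71) 2 ≠ 0 := by decide +kernel
  have hneg : ReducesTo (-(2 • Q)) (![363, -451, 27] : Fin 3 → ZMod 71) := by
    convert reducesTo_two_nsmul_Q.neg using 1
    decide +kernel
  obtain ⟨i, rfl | rfl | rfl⟩ : ∃ i, n = 3 * i ∨ n = 3 * i + 1 ∨ n = 3 * i - 1 :=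
    ⟨(n + 1) / 3, by omega⟩
  · exact dvd_mul_right 3 i
  · have hv := reducesTo_two_nsmul_Q.add_zsmul_kernel h27 reducesTo_six_nsmul_Q i
    rw [show 2 • Q + i • 6 • Q = (3 * i + 1) • 2 • Q by module] at hv
    exact absurd (isSquare_sexticForm_one h.isCoprime hG (h.sieve_eq_fifty_mul hP hv))
      (by unfold sexticForm; decide +kernel)
  · have hv := hneg.add_zsmul_kernel h27' reducesTo_six_nsmul_Q i
    rw [show -(2 • Q) + i • 6 • Q = (3 * i - 1) • (2 • Q : Pt) by module] at hv
    exact absurd (isSquare_sexticForm_one h.isCoprime hG (h.sieve_eq_three_mul hP hv))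
      (by unfold sexticForm; decide +kernel)

lemma eq_three_mul_of_reducesTo {k : Type*} [Field k] {x z : k} (h : QuadricPoint a b c e)
    (hP : HasCoords P (quadricX a b c e) (quadricY a b c e)) (hv : ReducesTo P ![x, 0, z])
    (h30 : (30 : k) ≠ 0) (hz : z ≠ 0) (hx : x ^ 2 = 160 * z ^ 2) : (b : k) = 3 * a := by
  obtain ⟨⟨h2, h3⟩, h5⟩ : ((2 : k) ≠ 0 ∧ (3 : k) ≠ 0) ∧ (5 : k) ≠ 0 := by
    have : (30 : k) = 2 * 3 * 5 := by norm_num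
    simpa only [this, mul_ne_zero_iff] using h30
  have hx0 := ne_zero_of_sq_eq h30 hz hx
  obtain ⟨h₁, h₂, h₃⟩ := h.linear_relations_of_reducesTo hP hv
  simp only [Matrix.cons_val] at h₁ h₂ h₃
  obtain ⟨hc, he⟩ := h.cast_eqs (R := k)
  have hec : (e : k) = c := by
    have := mul_left_cancel₀ (mul_ne_zero h2 hx0) (h₃.trans (by ring : 0 * (b : k) = 2 * x * 0))
    exact sub_eq_zero.1 this
  have hb : (b : k) * (3 * a - b) = 0 := by
    apply mul_left_cancel₀ h2
    linear_combination he - hc + (e + c) * hec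
  rcases mul_eq_zero.1 hb with hb | hb
  · exfalso
    have ha : (a : k) ≠ 0 := fun ha ↦ intCast_ne_zero_of_isCoprime h.isCoprime ha hb
    rw [hec, hb] at h₁ h₂
    have hcases : (x + 4 * z) * (c - a) = 0 := by linear_combination h₁
    rcases mul_eq_zero.1 hcases with hxz | hca
    · have : (2 : k) ^ 4 * 3 ^ 2 * z ^ 2 ≠ 0 := by positivity
      exact this (by linear_combination (x - 4 * z) * hxz - hx)
    · have hxz : x - 40 * z = 0 := by
        apply mul_left_cancel₀ (mul_ne_zero h2 ha)
        linear_combination h₂ - (x - 40 * z) * hca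
      have : (2 : k) ^ 5 * 3 ^ 2 * 5 * z ^ 2 ≠ 0 := by positivity
      exact this (by linear_combination hx - (x + 40 * z) * hxz)
  · linear_combination -hb

lemma isSquare_298 {k : Type*} [Field k] {x z : k} (h : QuadricPoint a b c e)
    (hG : sexticForm a b = w ^ 2) (hP : HasCoords P (quadricX a b c e) (quadricY a b c e))
    (hv : ReducesTo P ![x, 0, z]) (h30 : (30 : k) ≠ 0) (hz : z ≠ 0) (hx : x ^ 2 = 160 * z ^ 2) :
    IsSquare (298 : k) := by
  obtain ⟨s, hs⟩ := isSquare_sexticForm_one h.isCoprime hG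
    (h.eq_three_mul_of_reducesTo hP hv h30 hz hx)
  have hs' : (2980 : k) = s * s := by rw [← hs, sexticForm]; norm_num
  have h2980 : x ^ 2 * 298 = (4 * s * z) ^ 2 := by
    linear_combination 298 * hx + 16 * z ^ 2 * hs'
  have hx0 := ne_zero_of_sq_eq h30 hz hx
  refine ⟨4 * s * z / x, ?_⟩
  field_simp
  linear_combination h2980

end QuadricPoint

lemma exists_eq_two_pow_mul {m : ℤ} (hm : m ≠ 0) (h3 : 3 ∣ m) :
    ∃ k : ℕ, ∀ d : ℕ, d ∣ 3 → ∃ t : ℤ, m = (2 ^ k * d : ℕ) * (2 * t + 1) := by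
  obtain ⟨k, j, hj, hkj⟩ := Nat.exists_eq_two_pow_mul_odd (Int.natAbs_ne_zero.2 hm)
  have h3j : 3 ∣ j := by
    have h3' : 3 ∣ 2 ^ k * j := hkj ▸ Int.natCast_dvd.1 h3
    exact (Nat.Coprime.pow_right k (by norm_num)).dvd_of_dvd_mul_left h3'
  refine ⟨k, fun d hd ↦ ?_⟩
  obtain ⟨i, rfl⟩ := hd.trans h3j
  obtain ⟨t, rfl⟩ := (Nat.odd_mul.1 hj).2
  rcases Int.natAbs_eq m with hm' | hm'
  · refine ⟨t, ?_⟩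
    rw [hm', hkj]
    push_cast
    ring
  · refine ⟨-t - 1, ?_⟩
    rw [hm', hkj]
    push_cast
    ring

lemma thirty_ne_zero {p : ℕ} [Fact p.Prime] (h10 : (10 : ZMod p) ≠ 0)
    (h298 : ¬ IsSquare (298 : ZMod p)) : (30 : ZMod p) ≠ 0 := fun h30 ↦ by
  have h3 : ((3 : ℕ) : ZMod p) = 0 := by
    apply mul_left_cancel₀ h10
    linear_combination h30
  rw [ZMod.natCast_eq_zero_iff, Nat.prime_dvd_prime_iff_eq Fact.out Nat.prime_three] at h3
  subst h3
  exact h298 ⟨1, rfl⟩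

namespace QuadricPoint

lemma odd_of_sexticForm_eq_sq (h : QuadricPoint a b c e) (hG : sexticForm a b = w ^ 2) {n : ℤ}
    (hP : HasCoords (n • Q) (quadricX a b c e) (quadricY a b c e)) : Odd n := by
  rw [← Int.not_even_iff_odd]
  rintro ⟨m, rfl⟩
  have hm0 : m ≠ 0 := by
    rintro rfl
    exact hP.ne_zero (zero_zsmul _)
  have h3m : 3 ∣ m := by
    rw [show (m + m) • Q = m • 2 • Q by module] at hP
    exact h.three_dvd_of_sexticForm_eq_sq hG hP
  obtain ⟨k, hk⟩ := exists_eq_two_pow_mul hm0 h3m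
  obtain ⟨d, L, N, M, hd, hR, hns⟩ := exists_slopeData_not_isSquare k
  obtain ⟨t, rfl⟩ := hk d (by rcases hd with rfl | rfl <;> norm_num)
  generalize 2 ^ k * d = n at *
  obtain ⟨p, hp, hpL, h298⟩ := exists_prime_dvd_not_isSquare hR.odd hns
  have : Fact p.Prime := ⟨hp⟩
  have hR2 := hR.double
  have hL : ((L ^ 4 - 40 * N ^ 4 : ℤ) : ZMod p) = 0 := (ZMod.intCast_zmod_eq_zero_iff_dvd _ _).2 hpL
  have h30 := thirty_ne_zero (mod_cast intCast_ne_zero_of_isCoprime hR2.isCoprime_ten hL) h298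
  obtain ⟨x, z, hz, hx, hv⟩ := hR2.exists_reducesTo hL
  have hv' := hv.add_zsmul_kernel hz (hR2.add_self_kernel hL) t
  rw [← natCast_zsmul, show (n : ℤ) • Q + (n : ℤ) • Q +
    t • ((n : ℤ) • Q + (n : ℤ) • Q + ((n : ℤ) • Q + (n : ℤ) • Q)) =
      (n * (2 * t + 1) + n * (2 * t + 1)) • Q by module] at hv'
  exact h298 (h.isSquare_298 hG hP hv' h30 hz hx)

theorem sexticForm_ne_sq (h : QuadricPoint a b c e) (w : ℤ) : sexticForm a b ≠ w ^ 2 := by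
  intro hG
  obtain ⟨c, e, n, h, hP⟩ : ∃ c e n, QuadricPoint a b c e ∧
      HasCoords (n • Q) (quadricX a b c e) (quadricY a b c e) := by
    obtain ⟨P, hP⟩ := h.exists_hasCoords
    obtain ⟨n, rfl | rfl⟩ := exists_eq_zsmul_Q_or_add_T P
    · exact ⟨c, e, n, h, hP⟩
    · have hPT := h.add_T hP
      rw [add_assoc, hasCoords_T.add_self_of_y_eq_zero, add_zero] at hPT
      exact ⟨-c, -e, n, h.neg_c.neg_e, hPT⟩
  obtain ⟨P', hP'⟩ := h.neg_c.exists_hasCoords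
  obtain rfl : P' = (1 - n) • Q := by
    rw [sub_zsmul, one_zsmul]
    exact eq_sub_of_add_eq' (h.add_eq_Q hP hP')
  have hn := h.odd_of_sexticForm_eq_sq hG hP
  have hn' := h.neg_c.odd_of_sexticForm_eq_sq hG hP'
  rw [Int.odd_iff] at hn hn'
  omega

end QuadricPoint

end Sieve

section Cover

lemma intCast_zmod_natAbs_eq_zero_iff {x d : ℤ} : (x : ZMod d.natAbs) = 0 ↔ d ∣ x := by
  rw [ZMod.intCast_zmod_eq_zero_iff_dvd, Int.natAbs_dvd]

lemma isCoprime_of_dvd_sq_add_mul {d x y z : ℤ} (hxy : IsCoprime x y) (hd : d ∣ x ^ 2 + y * z) :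
    IsCoprime d y :=
  (hxy.pow_left.add_mul_left_left z).of_isCoprime_of_dvd_left hd

lemma dvd_of_squarefree_of_dvd_mul_pow {d c m x : ℤ} {i j : ℕ} (hd : Squarefree d)
    (hdx : IsCoprime d x) (h : d ∣ m * x ^ i) (hm : m ∣ c ^ j) (hj : j ≠ 0) : d ∣ c :=
  (hd.dvd_pow_iff_dvd hj).1 ((hdx.pow_right.dvd_of_dvd_mul_right h).trans hm)

lemma dvd_170_of_squarefree {a b d : ℤ} (hd : Squarefree d) (hab : IsCoprime a b)
    (hA : d ∣ a ^ 2 + b ^ 2) (hEG : d ∣ (a ^ 2 + 6 * a * b - b ^ 2) * sexticForm a b) :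
    d ∣ 170 := by
  have hdb : IsCoprime d b := isCoprime_of_dvd_sq_add_mul hab (pow_two b ▸ hA)
  have hdvd : d ∣ 340 ^ 2 * b ^ 9 := by
    rw [← intCast_zmod_natAbs_eq_zero_iff] at hA hEG ⊢
    push_cast [sexticForm] at hA hEG ⊢
    grind
  exact dvd_of_squarefree_of_dvd_mul_pow (j := 4) hd hdb hdvd (by norm_num) (by norm_num)

lemma dvd_ten_of_squarefree {a b d : ℤ} (hd : Squarefree d) (hab : IsCoprime a b)
    (hE : d ∣ a ^ 2 + 6 * a * b - b ^ 2) (hAG : d ∣ (a ^ 2 + b ^ 2) * sexticForm a b) :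
    d ∣ 10 := by
  have hdb : IsCoprime d b := by
    apply isCoprime_of_dvd_sq_add_mul (z := 6 * a - b) hab
    convert hE using 1
    ring
  have hdvd : d ∣ 2000 * b ^ 9 := by
    rw [← intCast_zmod_natAbs_eq_zero_iff] at hE hAG ⊢
    push_cast [sexticForm] at hE hAG ⊢
    grind
  exact dvd_of_squarefree_of_dvd_mul_pow (j := 4) hd hdb hdvd (by norm_num) (by norm_num)

/-- The coprime pair `(x, y)` lies on the twist by `(d₁, d₂)` of the cover of
`z ^ 2 = (x ^ 2 + y ^ 2) * (x ^ 2 + 6xy - y ^ 2) * G(x, y)` on which the three factors become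
squares.  Here `n` is `d₁ * d₂` up to a square factor. -/
def IsCoverPoint {R : Type*} [CommRing R] (d₁ d₂ n x y : R) : Prop :=
  (∃ s, x ^ 2 + y ^ 2 = d₁ * s ^ 2) ∧ (∃ t, x ^ 2 + 6 * x * y - y ^ 2 = d₂ * t ^ 2) ∧
    (∃ g, n * sexticForm x y = g ^ 2) ∧ IsCoprime x y

instance {R : Type*} [CommRing R] [Fintype R] [DecidableEq R] (d₁ d₂ n x y : R) :
    Decidable (IsCoverPoint d₁ d₂ n x y) := by
  unfold IsCoverPoint IsCoprime
  infer_instance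

lemma exists_isCoverPoint {a b k : ℤ} (hab : IsCoprime a b) (hk : k ≠ 0)
    (h : (a ^ 2 + b ^ 2) * (a ^ 2 + 6 * a * b - b ^ 2) * sexticForm a b = k ^ 2) :
    ∃ d₁ d₂, 0 < d₁ ∧ d₁ ∣ 170 ∧ d₂ ∣ 10 ∧ IsCoverPoint d₁ d₂ (d₁ * d₂) a b := by
  have hk2 : k ^ 2 ≠ 0 := pow_ne_zero 2 hk
  have hA : a ^ 2 + b ^ 2 ≠ 0 := fun h0 ↦ hk2 (by rw [← h, h0, zero_mul, zero_mul])
  have hE : a ^ 2 + 6 * a * b - b ^ 2 ≠ 0 := fun h0 ↦ hk2 (by rw [← h, h0, mul_zero, zero_mul])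
  obtain ⟨d₁, s, f₁, hd₁, hs, hf₁⟩ := exists_squarefree_mul_sq hA ((mul_assoc ..).symm.trans h)
  obtain ⟨d₂, t, f₂, hd₂, ht, hf₂⟩ := exists_squarefree_mul_sq (k := k) hE
    (m := (a ^ 2 + b ^ 2) * sexticForm a b) (by rw [← h]; ring)
  have hst : s * t ≠ 0 := by
    rintro h0
    rcases mul_eq_zero.1 h0 with rfl | rfl
    · exact hA (by rw [hs]; ring)
    · exact hE (by rw [ht]; ring)
  have hk' : (s * t) ^ 2 * (d₁ * d₂ * sexticForm a b) = k ^ 2 := by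
    rw [← h, hs, ht]
    ring
  obtain ⟨g, rfl⟩ := (Int.pow_dvd_pow_iff two_ne_zero).1 (Dvd.intro _ hk')
  have hg : d₁ * d₂ * sexticForm a b = g ^ 2 :=
    mul_left_cancel₀ (pow_ne_zero 2 hst) (hk'.trans (mul_pow ..))
  refine ⟨d₁, d₂, ?_, dvd_170_of_squarefree hd₁ hab (Dvd.intro _ hs.symm) (Dvd.intro _ hf₁.symm),
    dvd_ten_of_squarefree hd₂ hab (Dvd.intro _ ht.symm) (Dvd.intro _ hf₂.symm),
    ⟨s, hs⟩, ⟨t, ht⟩, ⟨g, hg⟩, hab⟩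
  have : 0 < a ^ 2 + b ^ 2 := lt_of_le_of_ne (by positivity) hA.symm
  rw [hs] at this
  exact pos_of_mul_pos_left this (sq_nonneg s)

namespace IsCoverPoint

variable {d₁ d₂ n a b : ℤ}

lemma intCast {R : Type*} [CommRing R] (h : IsCoverPoint d₁ d₂ n a b) :
    IsCoverPoint (d₁ : R) d₂ n a b := by
  obtain ⟨⟨s, hs⟩, ⟨t, ht⟩, ⟨g, hg⟩, hab⟩ := h
  refine ⟨⟨s, mod_cast congrArg (Int.cast : ℤ → R) hs⟩,
    ⟨t, mod_cast congrArg (Int.cast : ℤ → R) ht⟩, ⟨g, ?_⟩, hab.intCast⟩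
  rw [← intCast_sexticForm]
  exact mod_cast congrArg (Int.cast : ℤ → R) hg

lemma swap (h : IsCoverPoint d₁ d₂ n a b) : IsCoverPoint d₁ (-d₂) (-n) (-b) a := by
  obtain ⟨⟨s, hs⟩, ⟨t, ht⟩, ⟨g, hg⟩, hab⟩ := h
  refine ⟨⟨s, ?_⟩, ⟨t, ?_⟩, ⟨g, ?_⟩, hab.symm.neg_left⟩
  · linear_combination hs
  · linear_combination -ht
  · unfold sexticForm at hg ⊢
    linear_combination hg

lemma of_mul_sq {k : ℤ} (hk : k ≠ 0) (h : IsCoverPoint d₁ d₂ (k ^ 2 * n) a b) :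
    IsCoverPoint d₁ d₂ n a b := by
  obtain ⟨hs, ht, ⟨g, hg⟩, hab⟩ := h
  rw [mul_assoc] at hg
  obtain ⟨g', rfl⟩ := (Int.pow_dvd_pow_iff two_ne_zero).1 (Dvd.intro _ hg)
  exact ⟨hs, ht, ⟨g', mul_left_cancel₀ (pow_ne_zero 2 hk) (hg.trans (mul_pow ..))⟩, hab⟩

end IsCoverPoint

lemma not_isCoverPoint_one {a b : ℤ} (hb : b ≠ 0) : ¬ IsCoverPoint 1 1 1 a b := by
  rintro ⟨⟨c, hc⟩, ⟨e, he⟩, ⟨w, hw⟩, hab⟩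
  rw [one_mul] at hc he hw
  exact QuadricPoint.sexticForm_ne_sq ⟨hb, hab, hc, he⟩ w hw

lemma not_isCoverPoint_zmod_seven : ∀ d₁ ∈ ({5, 10, 17, 34} : Finset ℤ),
    ∀ d₂ ∈ ({1, -1, 2, -2, 5, -5, 10, -10} : Finset ℤ), ∀ x y : ZMod 7,
      ¬ IsCoverPoint (d₁ : ZMod 7) d₂ (d₁ * d₂ : ℤ) x y := by
  decide +kernel

lemma not_isCoverPoint_zmod_eleven : ∀ d₁ ∈ ({2, 85} : Finset ℤ),
    ∀ d₂ ∈ ({1, -1, 2, -2, 5, -5, 10, -10} : Finset ℤ), ∀ x y : ZMod 11,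
      ¬ IsCoverPoint (d₁ : ZMod 11) d₂ (d₁ * d₂ : ℤ) x y := by
  decide +kernel

lemma not_isCoverPoint_zmod_eight : ∀ d₂ ∈ ({2, -2, 5, -5, 10, -10} : Finset ℤ), ∀ x y : ZMod 8,
    ¬ IsCoverPoint ((1 : ℤ) : ZMod 8) d₂ (1 * d₂ : ℤ) x y := by
  decide +kernel

lemma not_isCoverPoint_zmod_sixteen : ∀ d₂ ∈ ({1, -1, 2, -2, 5, -5} : Finset ℤ), ∀ x y : ZMod 16,
    ¬ IsCoverPoint ((170 : ℤ) : ZMod 16) d₂ (170 * d₂ : ℤ) x y := by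
  decide +kernel

lemma not_isCoverPoint_zmod_twentyFive : ∀ u ∈ ({1, -1} : Finset ℤ), ∀ x y : ZMod 25,
    ¬ IsCoverPoint ((170 : ℤ) : ZMod 25) (10 * u : ℤ) (17 * u : ℤ) x y := by
  decide +kernel

lemma mem_of_dvd_170 {d : ℤ} (hd : 0 < d) (h : d ∣ 170) :
    d = 1 ∨ d = 170 ∨ d ∈ ({5, 10, 17, 34} : Finset ℤ) ∨ d ∈ ({2, 85} : Finset ℤ) := by
  have := Int.le_of_dvd (by norm_num) h
  interval_cases d <;> revert h <;> decide

lemma mem_of_dvd_ten {d : ℤ} (h : d ∣ 10) :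
    d ∈ ({1, -1, 2, -2, 5, -5, 10, -10} : Finset ℤ) := by
  have := Int.le_of_dvd (by norm_num) h
  have := Int.le_of_dvd (by norm_num) (neg_dvd.2 h)
  have : -10 ≤ d := by linarith
  interval_cases d <;> revert h <;> decide

lemma not_isCoverPoint {a b d₁ d₂ : ℤ} (ha : a ≠ 0) (hb : b ≠ 0) (hpos : 0 < d₁)
    (hd₁ : d₁ ∣ 170) (hd₂ : d₂ ∣ 10) : ¬ IsCoverPoint d₁ d₂ (d₁ * d₂) a b := fun h ↦ by
  have hmem := mem_of_dvd_ten hd₂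
  rcases mem_of_dvd_170 hpos hd₁ with rfl | rfl | h₁ | h₁
  · obtain rfl | rfl | h₂ : d₂ = 1 ∨ d₂ = -1 ∨ d₂ ∈ ({2, -2, 5, -5, 10, -10} : Finset ℤ) := by
      simpa only [Finset.mem_insert] using hmem
    · exact not_isCoverPoint_one hb h
    · exact not_isCoverPoint_one ha h.swap
    · exact not_isCoverPoint_zmod_eight d₂ h₂ a b h.intCast
  · have hsplit : ∀ d ∈ ({1, -1, 2, -2, 5, -5, 10, -10} : Finset ℤ),
        d ∈ ({1, -1, 2, -2, 5, -5} : Finset ℤ) ∨ ∃ u ∈ ({1, -1} : Finset ℤ), d = 10 * u := by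
      decide
    obtain h₂ | ⟨u, hu, rfl⟩ := hsplit d₂ hmem
    · exact not_isCoverPoint_zmod_sixteen d₂ h₂ a b h.intCast
    · rw [show 170 * (10 * u) = 10 ^ 2 * (17 * u) by ring] at h
      exact not_isCoverPoint_zmod_twentyFive u hu a b (h.of_mul_sq (by norm_num)).intCast
  · exact not_isCoverPoint_zmod_seven d₁ h₁ d₂ hmem a b h.intCast
  · exact not_isCoverPoint_zmod_eleven d₁ h₁ d₂ hmem a b h.intCast

lemma mul_sexticForm_ne_sq {a b k : ℤ} (hab : IsCoprime a b) (ha : a ≠ 0) (hb : b ≠ 0)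
    (hk : k ≠ 0) :
    (a ^ 2 + b ^ 2) * (a ^ 2 + 6 * a * b - b ^ 2) * sexticForm a b ≠ k ^ 2 := fun h ↦ by
  obtain ⟨d₁, d₂, hpos, hd₁, hd₂, hcover⟩ := exists_isCoverPoint hab hk h
  exact not_isCoverPoint ha hb hpos hd₁ hd₂ hcover

end Cover

section Conic

variable {s x d m z : ℚ}

theorem sq_ne_mul_sexticForm_one (hm : m ≠ 0) (hz : z ≠ 0) :
    z ^ 2 ≠ (m ^ 2 + 1) * (m ^ 2 + 6 * m - 1) * sexticForm m 1 := fun h ↦ by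
  have hden : (m.den : ℤ) ≠ 0 := mod_cast m.den_ne_zero
  have hk : (z * m.den ^ 5) ^ 2 = (((m.num ^ 2 + (m.den : ℤ) ^ 2) *
      (m.num ^ 2 + 6 * m.num * m.den - (m.den : ℤ) ^ 2) * sexticForm m.num m.den : ℤ) : ℚ) := by
    push_cast [sexticForm]
    rw [← Rat.mul_den_eq_num m, mul_pow, h, sexticForm]
    ring
  obtain ⟨k, hzk⟩ := exists_intCast_eq_of_pow_eq two_ne_zero hk
  have hk0 : k ≠ 0 := by
    rintro rfl
    exact mul_ne_zero hz (pow_ne_zero 5 (mod_cast hden)) (hzk.trans Int.cast_zero)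
  rw [hzk] at hk
  exact mul_sexticForm_ne_sq m.isCoprime_num_den (Rat.num_ne_zero.2 hm) hden hk0 (mod_cast hk.symm)

lemma pow_three_add_108_ne_zero (r : ℚ) : r ^ 3 + 108 ≠ 0 := fun h ↦ by
  have hr : r ^ 3 = (-108 : ℤ) := by push_cast; linarith
  obtain ⟨n, rfl⟩ := exists_intCast_eq_of_pow_eq three_ne_zero hr
  have hn : n ^ 3 = -108 := mod_cast hr
  have hmono : StrictMono fun j : ℤ ↦ j ^ 3 := Odd.strictMono_pow (by decide)
  have hlo : -5 < n := hmono.lt_iff_lt.1 (by norm_num [hn])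
  have hhi : n < -4 := hmono.lt_iff_lt.1 (by norm_num [hn])
  omega

lemma exists_hyperbola_param (h : d ^ 2 = (s - 1) ^ 2 + 4) :
    ∃ m ≠ 0, s = 1 + m - m⁻¹ ∧ d = m + m⁻¹ := by
  have hmul : (d + (s - 1)) / 2 * ((d - (s - 1)) / 2) = 1 := by linear_combination h / 4
  refine ⟨(d + (s - 1)) / 2, left_ne_zero_of_mul_eq_one hmul, ?_, ?_⟩ <;>
  · rw [inv_eq_of_mul_eq_one_right hmul]
    ring

lemma exists_sq_eq_of_curve_eq (hs : s + 5 ≠ 0)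
    (h : x ^ 4 - 32 * (s + 5) * ((s - 1) ^ 2 + 4) * ((s + 3) ^ 3 + 108) * x ^ 2 +
      256 * (s - 1) ^ 2 * (s + 5) ^ 2 * ((s - 1) ^ 2 + 4) * ((s + 3) ^ 3 + 108) ^ 2 = 0) :
    ∃ d, d ^ 2 = (s - 1) ^ 2 + 4 ∧
      x ^ 2 = 16 * (s + 5) * ((s + 3) ^ 3 + 108) * (d ^ 2 + 2 * d) := by
  have hC := pow_three_add_108_ne_zero (s + 3)
  generalize (s + 3) ^ 3 + 108 = C at *
  obtain ⟨d, hd⟩ : ∃ d, x ^ 2 = 16 * (s + 5) * C * ((s - 1) ^ 2 + 4 + 2 * d) :=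
    ⟨(x ^ 2 / (16 * (s + 5) * C) - ((s - 1) ^ 2 + 4)) / 2, by field_simp; ring⟩
  have hd2 : d ^ 2 = (s - 1) ^ 2 + 4 := by
    have hK : (32 * (s + 5) * C) ^ 2 ≠ 0 := by positivity
    apply mul_left_cancel₀ hK
    rw [show x ^ 4 = (x ^ 2) ^ 2 by ring, hd] at h
    linear_combination h
  exact ⟨d, hd2, by rw [hd, hd2]⟩

lemma ne_zero_of_param (hm : m ≠ 0) (hm1 : m + 1 ≠ 0) (hs : 1 + m - m⁻¹ + 5 ≠ 0)
    (hx : x ^ 2 = 16 * (1 + m - m⁻¹ + 5) * ((1 + m - m⁻¹ + 3) ^ 3 + 108) *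
      ((m + m⁻¹) ^ 2 + 2 * (m + m⁻¹))) : x ≠ 0 := by
  have hprod : (m + m⁻¹) ^ 2 + 2 * (m + m⁻¹) = (m ^ 2 + 1) * (m + 1) ^ 2 / m ^ 2 := by
    field_simp
    ring
  rw [← pow_ne_zero_iff two_ne_zero, hx, hprod]
  have := pow_three_add_108_ne_zero (1 + m - m⁻¹ + 3)
  positivity

lemma eq_one_of_sq_eq (hs : s + 5 ≠ 0) (hd : d ^ 2 = (s - 1) ^ 2 + 4)
    (hx : x ^ 2 = 16 * (s + 5) * ((s + 3) ^ 3 + 108) * (d ^ 2 + 2 * d)) : s = 1 ∧ x = 0 := by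
  obtain ⟨m, hm, rfl, rfl⟩ := exists_hyperbola_param hd
  by_cases hm1 : m + 1 = 0
  · obtain rfl := eq_neg_of_add_eq_zero_left hm1
    exact ⟨by norm_num, by norm_num at hx; exact hx⟩
  have hx0 := ne_zero_of_param hm hm1 hs hx
  have hz : (x * m ^ 3 / (4 * (m + 1))) ^ 2 =
      (m ^ 2 + 1) * (m ^ 2 + 6 * m - 1) * sexticForm m 1 := by
    rw [div_pow, mul_pow, hx, sexticForm]
    field_simp
    ring
  exact absurd hz (sq_ne_mul_sexticForm_one hm (by positivity))

lemma eq_neg_five_or_eq_one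
    (h : x ^ 4 - 32 * (s + 5) * ((s - 1) ^ 2 + 4) * ((s + 3) ^ 3 + 108) * x ^ 2 +
      256 * (s - 1) ^ 2 * (s + 5) ^ 2 * ((s - 1) ^ 2 + 4) * ((s + 3) ^ 3 + 108) ^ 2 = 0) :
    (s = -5 ∧ x = 0) ∨ (s = 1 ∧ x = 0) := by
  by_cases hs : s + 5 = 0
  · exact Or.inl ⟨by linarith, by simpa [hs] using h⟩
  · obtain ⟨d, hd, hx⟩ := exists_sq_eq_of_curve_eq hs h
    exact Or.inr (eq_one_of_sq_eq hs hd hx)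

end Conic

end CurveA4

/-- The rational points of the curve `𝒜₄ : x⁴ − p(t)x² + q(t) = 0`, where
`p(t) = 32(4t + 5)(16t² − 8t + 5)(64t³ + 144t² + 108t + 135)` and
`q(t) = 256(4t − 1)²(4t + 5)²(16t² − 8t + 5)(64t³ + 144t² + 108t + 135)²`,
are exactly `(−5/4, 0)` and `(1/4, 0)`. -/
theorem curve_A4_points (t x : ℚ) :
    x ^ 4 - (32 * (4 * t + 5) * (16 * t ^ 2 - 8 * t + 5) *
        (64 * t ^ 3 + 144 * t ^ 2 + 108 * t + 135)) * x ^ 2 +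
      256 * (4 * t - 1) ^ 2 * (4 * t + 5) ^ 2 * (16 * t ^ 2 - 8 * t + 5) *
        (64 * t ^ 3 + 144 * t ^ 2 + 108 * t + 135) ^ 2 = 0 ↔
    (t = -5/4 ∧ x = 0) ∨ (t = 1/4 ∧ x = 0) := by
  constructor
  · intro h
    rcases CurveA4.eq_neg_five_or_eq_one (s := 4 * t) (x := x) (by linear_combination h) with
      ⟨ht, hx⟩ | ⟨ht, hx⟩
    · exact Or.inl ⟨by linarith, hx⟩
    · exact Or.inr ⟨by linarith, hx⟩
  · rintro (⟨rfl, rfl⟩ | ⟨rfl, rfl⟩) <;> norm_num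
end

section
/- The set of pairs (t,x) ∈ ℚ × ℚ satisfying x⁴ + p(t)x² + q(t) = 0 is exactly {(−5/4, 0), (1/4, 0)}. -/
/-!
Put `u = 4 t - 1`. Completing the square gives `(x² + (u + 6)(u² + 4))² = (u² + 4)(2 (u + 6))²`, so
for `u ≠ -6` the number `u² + 4` is a square `w²`. Parametrizing this conic by `u = r⁻¹ - r`,
`w = r⁻¹ + r` turns the curve into the genus two curve `y² = r (r² + 1)(r² - 6 r - 1)`; here
`r ≠ 0`, and `r ≠ 1` unless `u = 0`.

Let `r = p / q` in lowest terms, so that `p q (p² + q²)(p² - 6 p q - q²)` is a square. If `p` and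
`q` are both odd, it is `20` modulo `32`, which is impossible. Otherwise `p` and `q` are squares
`P²`, `Q²` up to sign. The last two factors can only share the primes `2` and `5`, but `2` does not
divide `p² + q²` by parity, and `5` does not divide `P⁴ + Q⁴ = p² + q²` by Fermat's little theorem.
Hence `P⁴ + Q⁴` is itself a square, and Fermat's theorem on `a⁴ + b⁴ = c²` forces `r = 0`.
-/

section CoprimeFactors

variable {a b : ℤ}

lemma exists_sq_eq_pow_four_of_isSquare_mul (hab : IsCoprime a b) (h : IsSquare (a * b)) :
    ∃ c, a ^ 2 = c ^ 4 := by
  obtain ⟨d, hd⟩ := h.exists_sq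
  obtain ⟨c, rfl | rfl⟩ := Int.sq_of_isCoprime hab hd
  all_goals exact ⟨c, by ring⟩

lemma isSquare_of_isSquare_mul_of_nonneg (hab : IsCoprime a b) (ha : 0 ≤ a)
    (h : IsSquare (a * b)) : IsSquare a := by
  obtain ⟨d, hd⟩ := h.exists_sq
  obtain ⟨c, rfl | rfl⟩ := Int.sq_of_isCoprime hab hd
  · exact .sq c
  · have hc : c ^ 2 = 0 := le_antisymm (neg_nonneg.mp ha) (sq_nonneg c)
    simp [hc]

lemma isCoprime_pow_pred_add_pow_pred {ℓ : ℕ} (hℓ : ℓ.Prime) (hℓ2 : ℓ ≠ 2) (hab : IsCoprime a b) :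
    IsCoprime (a ^ (ℓ - 1) + b ^ (ℓ - 1)) (ℓ : ℤ) := by
  have : Fact ℓ.Prime := ⟨hℓ⟩
  have one_add_one_ne_zero : (1 + 1 : ZMod ℓ) ≠ 0 := by
    rw [one_add_one_eq_two]
    exact Ring.two_ne_zero (by rwa [ZMod.ringChar_zmod_n])
  have hℓ' : Prime (ℓ : ℤ) := Nat.prime_iff_prime_int.mp hℓ
  refine (hℓ'.coprime_iff_not_dvd.mpr fun hdvd ↦ ?_).symm
  rw [← ZMod.intCast_zmod_eq_zero_iff_dvd] at hdvd
  push_cast [ZMod.pow_card_sub_one] at hdvd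
  have ha : (a : ZMod ℓ) = 0 := by grind
  have hb : (b : ZMod ℓ) = 0 := by grind
  rw [ZMod.intCast_zmod_eq_zero_iff_dvd] at ha hb
  exact hℓ'.not_isUnit (hab.isUnit_of_dvd' ha hb)

lemma odd_sq_add_sq_of_isCoprime (hab : IsCoprime a b) (h : ¬(Odd a ∧ Odd b)) :
    Odd (a ^ 2 + b ^ 2) := by
  have hne : ¬(Even a ∧ Even b) := fun ⟨ha, hb⟩ ↦
    Int.prime_two.not_isUnit (hab.isUnit_of_dvd' ha.two_dvd hb.two_dvd)
  grind [Int.odd_add, Int.odd_pow, Int.even_pow]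

end CoprimeFactors

/-- The binary sextic `p q (p² + q²)(p² - 6 p q - q²)`. Its dehomogenization `q = 1` is the
right-hand side of the genus two curve `y² = r (r² + 1)(r² - 6 r - 1)` birational to `𝒜₅`. -/
def sexticForm {R : Type*} [CommRing R] (p q : R) : R :=
  p * q * (p ^ 2 + q ^ 2) * (p ^ 2 - 6 * p * q - q ^ 2)

section SexticForm

variable {R S : Type*} [CommRing R] [CommRing S]

lemma map_sexticForm (f : R →+* S) (p q : R) : f (sexticForm p q) = sexticForm (f p) (f q) := by
  simp only [sexticForm, map_mul, map_add, map_sub, map_pow, map_ofNat]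

lemma sexticForm_mul_right (p q k : R) :
    sexticForm (p * k) (q * k) = sexticForm p q * k ^ 6 := by
  unfold sexticForm
  ring

lemma sexticForm_neg_swap (p q : R) : sexticForm q (-p) = sexticForm p q := by
  unfold sexticForm
  ring

variable {p q : R}

lemma isCoprime_left_sq_add_sq (hpq : IsCoprime p q) : IsCoprime p (p ^ 2 + q ^ 2) := by
  rw [sq p]
  exact hpq.pow_right.mul_add_left_right p

lemma isCoprime_sq_add_sq_mul (hpq : IsCoprime p q) : IsCoprime (p ^ 2 + q ^ 2) (p * q) := by
  have hq := isCoprime_left_sq_add_sq hpq.symm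
  rw [add_comm] at hq
  exact (isCoprime_left_sq_add_sq hpq).symm.mul_right hq.symm

lemma isCoprime_quadratic_factors (hpq : IsCoprime p q) (h20 : IsCoprime (p ^ 2 + q ^ 2) 20) :
    IsCoprime (p ^ 2 + q ^ 2) (p ^ 2 - 6 * p * q - q ^ 2) := by
  -- The two quadratic forms have resultant `40`; this is the corresponding Bézout relation.
  have bezout : (3 * q + p) * (p ^ 2 - 6 * p * q - q ^ 2) =
      -(20 * (p * q) * q) + (p ^ 2 + q ^ 2) * (p - 3 * q) := by ring
  have hq : IsCoprime (p ^ 2 + q ^ 2) q := (isCoprime_sq_add_sq_mul hpq).of_mul_right_right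
  have h := (((h20.mul_right (isCoprime_sq_add_sq_mul hpq)).mul_right hq).neg_right
    ).add_mul_left_right (p - 3 * q)
  rw [← bezout] at h
  exact h.of_mul_right_right

end SexticForm

section Descent

variable {p q : ℤ}

lemma not_isSquare_sexticForm_of_odd (hp : Odd p) (hq : Odd q) : ¬IsSquare (sexticForm p q) := by
  have form_mod_32 : ∀ m n : ZMod 32, sexticForm (2 * m + 1) (2 * n + 1) = 20 := by
    unfold sexticForm
    decide +kernel
  have not_square_mod_32 : ¬IsSquare (20 : ZMod 32) := by decide
  obtain ⟨m, rfl⟩ := hp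
  obtain ⟨n, rfl⟩ := hq
  intro h
  have h32 := h.map (Int.castRingHom (ZMod 32))
  rw [map_sexticForm] at h32
  simp only [map_add, map_mul, map_one, map_ofNat, form_mod_32] at h32
  exact not_square_mod_32 h32

lemma exists_sq_eq_pow_four_of_isSquare_sexticForm (hpq : IsCoprime p q)
    (h : IsSquare (sexticForm p q)) : ∃ P, p ^ 2 = P ^ 4 := by
  have cofactor : sexticForm p q =
      p * (-q ^ 5 + p * (p ^ 3 * q - 6 * p ^ 2 * q ^ 2 - 6 * q ^ 4)) := by
    unfold sexticForm
    ring
  rw [cofactor] at h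
  exact exists_sq_eq_pow_four_of_isSquare_mul (hpq.pow_right.neg_right.add_mul_left_right _) h

lemma isSquare_sq_add_sq_of_isSquare_sexticForm (hpq : IsCoprime p q)
    (h20 : IsCoprime (p ^ 2 + q ^ 2) 20) (h : IsSquare (sexticForm p q)) :
    IsSquare (p ^ 2 + q ^ 2) := by
  have factor : sexticForm p q =
      (p ^ 2 + q ^ 2) * (p * q * (p ^ 2 - 6 * p * q - q ^ 2)) := by
    unfold sexticForm
    ring
  rw [factor] at h
  exact isSquare_of_isSquare_mul_of_nonneg
    ((isCoprime_sq_add_sq_mul hpq).mul_right (isCoprime_quadratic_factors hpq h20))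
    (by positivity) h

theorem mul_eq_zero_of_isSquare_sexticForm (hpq : IsCoprime p q)
    (h : IsSquare (sexticForm p q)) : p * q = 0 := by
  obtain ⟨P, hP⟩ := exists_sq_eq_pow_four_of_isSquare_sexticForm hpq h
  obtain ⟨Q, hQ⟩ : ∃ Q, q ^ 2 = Q ^ 4 :=
    exists_sq_eq_pow_four_of_isSquare_sexticForm hpq.symm.neg_right (by rwa [sexticForm_neg_swap])
  have hPQ : IsCoprime P Q := by
    rw [← IsCoprime.pow_iff (m := 4) (n := 4) (by norm_num) (by norm_num), ← hP, ← hQ]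
    exact hpq.pow
  have h2 : IsCoprime (p ^ 2 + q ^ 2) 2 := Int.isCoprime_two_right.mpr <|
    odd_sq_add_sq_of_isCoprime hpq fun hodd ↦ not_isSquare_sexticForm_of_odd hodd.1 hodd.2 h
  have h5 : IsCoprime (p ^ 2 + q ^ 2) 5 := by
    rw [hP, hQ]
    exact isCoprime_pow_pred_add_pow_pred Nat.prime_five (by norm_num) hPQ
  have h20 : IsCoprime (p ^ 2 + q ^ 2) 20 := by simpa using (h2.mul_right h2).mul_right h5
  obtain ⟨s, hs⟩ := (isSquare_sq_add_sq_of_isSquare_sexticForm hpq h20 h).exists_sq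
  rw [hP, hQ] at hs
  by_contra hne
  have hP0 : P ≠ 0 := by
    rintro rfl
    simp_all
  have hQ0 : Q ≠ 0 := by
    rintro rfl
    simp_all
  exact not_fermat_42 hP0 hQ0 hs

theorem eq_zero_of_isSquare_sexticForm_one {r : ℚ} (h : IsSquare (sexticForm r 1)) : r = 0 := by
  have hnum : IsSquare (sexticForm r.num (r.den : ℤ)) := by
    rw [← Rat.isSquare_intCast_iff, ← eq_intCast (Int.castRingHom ℚ), map_sexticForm]
    have hden : sexticForm (r.num : ℚ) r.den = sexticForm r 1 * r.den ^ 6 := by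
      rw [← sexticForm_mul_right, Rat.mul_den_eq_num, one_mul]
    simpa [hden] using h.mul (Even.isSquare_pow (by decide : Even 6) (r.den : ℚ))
  simpa using mul_eq_zero_of_isSquare_sexticForm r.isCoprime_num_den hnum

end Descent

section Parametrization

variable {K : Type*} [Field K]

lemma exists_sq_eq_sq_add_sq_of_biquadratic {a c u x : K} (ha : a ≠ 0) (hc : c ≠ 0)
    (h : x ^ 4 + 2 * a * (u ^ 2 + c ^ 2) * x ^ 2 + u ^ 2 * a ^ 2 * (u ^ 2 + c ^ 2) = 0) :
    ∃ w, w ^ 2 = u ^ 2 + c ^ 2 ∧ x ^ 2 = a * w * (c - w) := by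
  have completed_square :
      (x ^ 2 + a * (u ^ 2 + c ^ 2)) ^ 2 = (u ^ 2 + c ^ 2) * (c * a) ^ 2 := by
    linear_combination h
  obtain ⟨w, hw⟩ : ∃ w, x ^ 2 + a * (u ^ 2 + c ^ 2) = w * (c * a) :=
    ⟨_, (div_mul_cancel₀ _ (mul_ne_zero hc ha)).symm⟩
  have hw2 : w ^ 2 = u ^ 2 + c ^ 2 := by
    rw [hw, mul_pow] at completed_square
    exact mul_right_cancel₀ (pow_ne_zero 2 (mul_ne_zero hc ha)) completed_square
  exact ⟨w, hw2, by linear_combination hw + a * hw2⟩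

lemma exists_eq_inv_sub_of_sq_eq_sq_add_four [NeZero (2 : K)] {u w : K}
    (h : w ^ 2 = u ^ 2 + 4) : ∃ r ≠ 0, u = r⁻¹ - r ∧ w = r⁻¹ + r := by
  have h2 : (2 : K) ≠ 0 := two_ne_zero
  have hmul : (w - u) / 2 * ((w + u) / 2) = 1 := by
    field_simp
    linear_combination h
  refine ⟨(w - u) / 2, left_ne_zero_of_mul_eq_one hmul, ?_⟩
  rw [inv_eq_of_mul_eq_one_right hmul]
  constructor <;> field_simp <;> ring

lemma isSquare_sexticForm_one {r x : K} (hr : r ≠ 0) (hr1 : r ≠ 1)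
    (h : x ^ 2 = (r⁻¹ - r + 6) * (r⁻¹ + r) * (2 - (r⁻¹ + r))) : IsSquare (sexticForm r 1) := by
  have hr1' : r - 1 ≠ 0 := sub_ne_zero.mpr hr1
  have hsq : sexticForm r 1 = (x * r ^ 2 / (r - 1)) ^ 2 := by
    rw [div_pow, mul_pow, h, sexticForm]
    field_simp
    ring
  exact hsq ▸ .sq _

end Parametrization

theorem eq_zero_or_add_six_eq_zero_of_biquadratic {u x : ℚ}
    (h : x ^ 4 + 2 * (u + 6) * (u ^ 2 + 4) * x ^ 2 + u ^ 2 * (u + 6) ^ 2 * (u ^ 2 + 4) = 0) :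
    u = 0 ∨ u + 6 = 0 := by
  by_contra! ⟨hu, hu6⟩
  obtain ⟨w, hw, hx⟩ :=
    exists_sq_eq_sq_add_sq_of_biquadratic (c := 2) (u := u) (x := x) hu6 two_ne_zero
      (by linear_combination h)
  have hw4 : w ^ 2 = u ^ 2 + 4 := by linear_combination hw
  obtain ⟨r, hr, rfl, rfl⟩ := exists_eq_inv_sub_of_sq_eq_sq_add_four hw4
  have hr1 : r ≠ 1 := by
    rintro rfl
    norm_num at hu
  exact hr (eq_zero_of_isSquare_sexticForm_one (isSquare_sexticForm_one hr hr1 hx))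

/-- The rational points of the curve `𝒜₅ : x⁴ + p(t)x² + q(t) = 0`, where
`p(t) = 2(4t + 5)(16t² − 8t + 5)` and `q(t) = (4t − 1)²(4t + 5)²(16t² − 8t + 5)`,
are exactly `(−5/4, 0)` and `(1/4, 0)`. -/
theorem curve_A5_points (t x : ℚ) :
    x ^ 4 + (2 * (4 * t + 5) * (16 * t ^ 2 - 8 * t + 5)) * x ^ 2 +
      (4 * t - 1) ^ 2 * (4 * t + 5) ^ 2 * (16 * t ^ 2 - 8 * t + 5) = 0 ↔
    (t = -5/4 ∧ x = 0) ∨ (t = 1/4 ∧ x = 0) := by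
  constructor
  · intro h
    have ht : 4 * t - 1 = 0 ∨ 4 * t - 1 + 6 = 0 :=
      eq_zero_or_add_six_eq_zero_of_biquadratic (x := x) (by linear_combination h)
    rcases ht with ht | ht
    · obtain rfl : t = 1/4 := by linarith
      have hx : x ^ 2 * (x ^ 2 + 48) = 0 := by linear_combination h
      have hpos : x ^ 2 + 48 ≠ 0 := by positivity
      exact .inr ⟨rfl, by simpa [hpos] using hx⟩
    · obtain rfl : t = -5/4 := by linarith
      exact .inl ⟨rfl, by norm_num at h; exact h⟩
  · rintro (⟨rfl, rfl⟩ | ⟨rfl, rfl⟩) <;> norm_num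
end
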